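/- Let 2 < p ≤ 4. Assume condition (LD2) holds and |N(B_i)| ≤ κ for every i ∈ 𝒥, where N(B_i) = {j ∈ 𝒥 : B_j ∩ B_i ≠ ∅}. Then sup_{z∈ℝ} |F(z) − Φ(z)| ≤ (13 + 11κ) Σ_{i∈𝒥} (E|X_i|^{3∧p} + E|Y_i|^{3∧p}) + 2.5 (κ Σ_{i∈𝒥} (E|X_i|^p + E|Y_i|^p))^{1/2}. -/

import Mathlib

open MeasureTheory ProbabilityTheory Real

noncomputable def stdGaussianCDF : ℝ → ℝ :=
  fun z => ∫ x in Set.Iic z, (Real.sqrt (2 * Real.pi))⁻¹ * Real.exp (-x ^ 2 / 2)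

lemma gs_int : Integrable (fun x : ℝ => Real.exp (-x^2/2)) := by
  have := integrable_exp_neg_mul_sq (b := 1/2) (by norm_num)
  refine this.congr (Filter.Eventually.of_forall fun x => ?_)
  dsimp; congr 1; ring

lemma gs_total : ∫ x : ℝ, Real.exp (-x^2/2) = Real.sqrt (2*Real.pi) := by
  have := integral_gaussian (1/2)
  rw [show Real.sqrt (2*Real.pi) = Real.sqrt (Real.pi/(1/2)) by congr 1; ring, ← this]
  congr 1; ext x; congr 1; ring

lemma sqrt2pi_le : Real.sqrt (2*Real.pi) ≤ 2.6 := by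
  rw [Real.sqrt_le_left (by norm_num)]
  have := Real.pi_lt_d2
  norm_num at *; linarith

lemma sqrt2pi_ge : 2.5 ≤ Real.sqrt (2*Real.pi) := by
  apply Real.le_sqrt_of_sq_le
  have := Real.pi_gt_d2
  norm_num at *; linarith

lemma gs_mills (w : ℝ) (hw : 0 ≤ w) :
    w * ∫ x in Set.Ioi w, Real.exp (-x^2/2) ≤ Real.exp (-w^2/2) := by
  have hder : ∀ x ∈ Set.Ici w, HasDerivAt (fun x : ℝ => -Real.exp (-x^2/2)) (x * Real.exp (-x^2/2)) x := by
    intro x _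
    have h1 : HasDerivAt (fun x : ℝ => -x^2/2) (-x) x := by
      have := ((hasDerivAt_pow 2 x).neg).div_const 2
      exact this.congr_deriv (by push_cast; ring)
    exact h1.exp.neg.congr_deriv (by ring)
  have hlim : Filter.Tendsto (fun x : ℝ => -Real.exp (-x^2/2)) Filter.atTop (nhds (-0)) := by
    apply Filter.Tendsto.neg
    apply Real.tendsto_exp_atBot.comp
    have : Filter.Tendsto (fun x : ℝ => x^2/2) Filter.atTop Filter.atTop :=
      (Filter.tendsto_pow_atTop (by norm_num)).atTop_div_const (by norm_num)
    refine (Filter.tendsto_neg_atTop_atBot.comp this).congr fun x => ?_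
    simp [neg_div]
  have hpos : ∀ x ∈ Set.Ioi w, 0 ≤ x * Real.exp (-x^2/2) := fun x hx =>
    mul_nonneg (hw.trans (le_of_lt hx)) (Real.exp_pos _).le
  have hI := integrableOn_Ioi_deriv_of_nonneg' hder hpos hlim
  have hE := integral_Ioi_of_hasDerivAt_of_nonneg' hder hpos hlim
  rw [← integral_const_mul]
  calc _ ≤ ∫ x in Set.Ioi w, x * Real.exp (-x^2/2) := by
        apply setIntegral_mono_on (gs_int.integrableOn.const_mul w) hI measurableSet_Ioi
        intro x hx
        exact mul_le_mul_of_nonneg_right (le_of_lt hx) (Real.exp_pos _).le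
    _ = _ := by rw [hE]; simp

lemma gs_tail (w : ℝ) (hw : 0 ≤ w) :
    Real.exp (w^2/2) * ∫ x in Set.Ioi w, Real.exp (-x^2/2) ≤ 2.6 := by
  rw [← integral_const_mul]
  refine le_trans ?_ sqrt2pi_le
  rw [← gs_total, ← integral_sub_right_eq_self (fun x : ℝ => Real.exp (-x^2/2)) w]
  calc _ ≤ ∫ x in Set.Ioi w, Real.exp (-(x-w)^2/2) := by
        apply setIntegral_mono_on (gs_int.integrableOn.const_mul _)
          (gs_int.comp_sub_right w).integrableOn measurableSet_Ioi
        intro x hx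
        have hx : w < x := hx
        rw [← Real.exp_add]
        apply Real.exp_le_exp.2
        nlinarith
    _ ≤ _ := setIntegral_le_integral (gs_int.comp_sub_right w)
        (Filter.Eventually.of_forall fun x => (Real.exp_pos _).le)

lemma gs_Iic (w : ℝ) : ∫ x in Set.Iic w, Real.exp (-x^2/2) = ∫ x in Set.Ioi (-w), Real.exp (-x^2/2) := by
  have := integral_comp_neg_Iic w (fun x : ℝ => Real.exp (-x^2/2))
  simpa using this

lemma stein_exists (h : ℝ → ℝ) (hc : Continuous h) (h0 : ∀ x, 0 ≤ h x) (h1 : ∀ x, h x ≤ 1) (m : ℝ)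
    (hm : m = ∫ x, (Real.sqrt (2 * Real.pi))⁻¹ * Real.exp (-x ^ 2 / 2) * h x) :
    ∃ f : ℝ → ℝ, (∀ w, HasDerivAt f (w * f w + h w - m) w) ∧ (∀ w, |f w| ≤ 2.6) ∧
      (∀ w, |w * f w + h w - m| ≤ 1) := by
  have hs : 0 < Real.sqrt (2*Real.pi) := by positivity
  have hhint : Integrable (fun x : ℝ => Real.exp (-x^2/2) * h x) := by
    apply gs_int.mul_bdd (c := 1) hc.aestronglyMeasurable
    exact Filter.Eventually.of_forall fun x => by
      rw [Real.norm_eq_abs, abs_le]; constructor <;> linarith [h0 x, h1 x]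
  have hm' : m * Real.sqrt (2*Real.pi) = ∫ x, Real.exp (-x^2/2) * h x := by
    rw [hm]; simp_rw [mul_assoc]; rw [integral_const_mul]; field_simp
  have hm0 : 0 ≤ m := by
    have : 0 ≤ ∫ x, Real.exp (-x^2/2) * h x := integral_nonneg fun x => mul_nonneg (Real.exp_pos _).le (h0 x)
    rw [← hm'] at this
    exact nonneg_of_mul_nonneg_left this hs
  have hm1 : m ≤ 1 := by
    have : ∫ x, Real.exp (-x^2/2) * h x ≤ ∫ x, Real.exp (-x^2/2) :=
      integral_mono hhint gs_int fun x => mul_le_of_le_one_right (Real.exp_pos _).le (h1 x)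
    rw [← hm', gs_total] at this
    exact le_of_mul_le_mul_right (by linarith) hs
  set g : ℝ → ℝ := fun x => (h x - m) * Real.exp (-x^2/2) with hg
  have hgc : Continuous g := by fun_prop
  have hgi : Integrable g := by
    refine (hhint.sub (gs_int.const_mul m)).congr (Filter.Eventually.of_forall fun x => ?_)
    simp only [hg, Pi.sub_apply]; ring
  have hg0 : ∫ x, g x = 0 := by
    have : ∫ x, g x = (∫ x, Real.exp (-x^2/2) * h x) - ∫ x, m * Real.exp (-x^2/2) := by
      rw [← integral_sub hhint (gs_int.const_mul m)]
      congr 1; ext x; simp only [hg]; ring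
    rw [this, integral_const_mul, gs_total, ← hm']; ring
  set G : ℝ → ℝ := fun w => ∫ x in Set.Iic w, g x with hG
  have hGd : ∀ w, HasDerivAt G (g w) w := by
    intro w
    have e : G = fun w => G 0 + ∫ x in (0:ℝ)..w, g x := by
      ext w
      rw [← intervalIntegral.integral_Iic_sub_Iic hgi.integrableOn hgi.integrableOn]
      simp [hG]
    rw [e]
    have := intervalIntegral.integral_hasDerivAt_right (hgi.intervalIntegrable (a := 0) (b := w))
      (hgc.stronglyMeasurableAtFilter _ _) hgc.continuousAt
    exact this.const_add _
  have hGI : ∀ w, G w = - ∫ x in Set.Ioi w, g x := by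
    intro w
    have := intervalIntegral.integral_Iic_add_Ioi (b := w) (f := g) (μ := volume) hgi.integrableOn hgi.integrableOn
    rw [hg0] at this
    simp only [hG]; linarith
  -- bounds on pieces
  have lo : ∀ (s : Set ℝ), -m * ∫ x in s, Real.exp (-x^2/2) ≤ ∫ x in s, g x := by
    intro s
    rw [← integral_const_mul]
    apply integral_mono (gs_int.integrableOn.const_mul _) hgi.integrableOn
    intro x
    exact mul_le_mul_of_nonneg_right (by linarith [h0 x]) (Real.exp_pos _).le
  have hi : ∀ (s : Set ℝ), ∫ x in s, g x ≤ (1-m) * ∫ x in s, Real.exp (-x^2/2) := by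
    intro s
    rw [← integral_const_mul]
    apply integral_mono hgi.integrableOn (gs_int.integrableOn.const_mul _)
    intro x
    exact mul_le_mul_of_nonneg_right (by linarith [h1 x]) (Real.exp_pos _).le
  have key : ∀ w, |Real.exp (w^2/2) * G w| ≤ 2.6 ∧ m - 1 ≤ w * (Real.exp (w^2/2) * G w) ∧
      w * (Real.exp (w^2/2) * G w) ≤ m := by
    intro w
    have hee : Real.exp (w^2/2) * Real.exp (-w^2/2) = 1 := by
      rw [← Real.exp_add]; simp; ring
    have hep := Real.exp_pos (w^2/2)
    rcases le_total 0 w with hw | hw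
    · set T := ∫ x in Set.Ioi w, Real.exp (-x^2/2)
      have hT0 : 0 ≤ T := integral_nonneg fun x => (Real.exp_pos _).le
      have a1 := lo (Set.Ioi w)
      have a2 := hi (Set.Ioi w)
      have t1 := gs_tail w hw
      have t2 : Real.exp (w^2/2) * (w * T) ≤ 1 := by
        rw [← hee]; exact mul_le_mul_of_nonneg_left (gs_mills w hw) hep.le
      have t3 : 0 ≤ Real.exp (w^2/2) * (w * T) := by positivity
      have t0 : 0 ≤ Real.exp (w^2/2) * T := by positivity
      have b1 : G w ≤ m * T := by rw [hGI]; linarith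
      have b2 : -(1-m) * T ≤ G w := by rw [hGI]; linarith
      have c1 := mul_le_mul_of_nonneg_left b1 hep.le
      have c2 := mul_le_mul_of_nonneg_left b2 hep.le
      have d1 := mul_le_mul_of_nonneg_left c1 hw
      have d2 := mul_le_mul_of_nonneg_left c2 hw
      refine ⟨abs_le.2 ⟨?_, ?_⟩, ?_, ?_⟩ <;> nlinarith
    · set T := ∫ x in Set.Iic w, Real.exp (-x^2/2) with hTd
      have hT0 : 0 ≤ T := integral_nonneg fun x => (Real.exp_pos _).le
      have a1 := lo (Set.Iic w)
      have a2 := hi (Set.Iic w)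
      have t1 := gs_tail (-w) (by linarith)
      have t2 := gs_mills (-w) (by linarith)
      rw [← gs_Iic, neg_sq, ← hTd] at t1 t2
      have t2 : Real.exp (w^2/2) * (-w * T) ≤ 1 := by
        rw [← hee]; exact mul_le_mul_of_nonneg_left t2 hep.le
      have hw' : 0 ≤ -w := by linarith
      have t3 : 0 ≤ Real.exp (w^2/2) * (-w * T) := by positivity
      have t0 : 0 ≤ Real.exp (w^2/2) * T := by positivity
      have b1 : -m * T ≤ G w := a1
      have b2 : G w ≤ (1-m) * T := a2
      have c1 := mul_le_mul_of_nonneg_left b1 hep.le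
      have c2 := mul_le_mul_of_nonneg_left b2 hep.le
      have d1 := mul_le_mul_of_nonneg_left c1 hw'
      have d2 := mul_le_mul_of_nonneg_left c2 hw'
      refine ⟨abs_le.2 ⟨?_, ?_⟩, ?_, ?_⟩ <;> nlinarith
  refine ⟨fun w => Real.exp (w^2/2) * G w, fun w => ?_, fun w => (key w).1, fun w => ?_⟩
  · have h1 : HasDerivAt (fun x : ℝ => x^2/2) w w := by
      have := ((hasDerivAt_pow 2 w)).div_const 2
      exact this.congr_deriv (by push_cast; ring)
    have hee : Real.exp (w^2/2) * Real.exp (-w^2/2) = 1 := by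
      rw [← Real.exp_add]; simp; ring
    refine (h1.exp.mul (hGd w)).congr_deriv ?_
    simp only [hg]
    linear_combination (h w - m) * hee
  · obtain ⟨_, b, c⟩ := key w
    rw [abs_le]; constructor <;> linarith [h0 w, h1 w]

noncomputable def hz (z α w : ℝ) : ℝ := max 0 (z + α - max z w) / α

lemma hz_cont (z α : ℝ) : Continuous (hz z α) := by unfold hz; fun_prop
lemma hz_nonneg (z w : ℝ) {α : ℝ} (hα : 0 < α) : 0 ≤ hz z α w := by unfold hz; positivity
lemma hz_le_one (z w : ℝ) {α : ℝ} (hα : 0 < α) : hz z α w ≤ 1 := by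
  unfold hz; rw [div_le_one hα]
  apply max_le hα.le; linarith [le_max_left z w]
lemma hz_anti (z : ℝ) {α : ℝ} (hα : 0 < α) : Antitone (hz z α) := by
  intro a b hab; unfold hz
  gcongr
lemma hz_one {z w α : ℝ} (hα : 0 < α) (h : w ≤ z) : hz z α w = 1 := by
  unfold hz; rw [max_eq_left h, max_eq_right (by linarith)]; field_simp; ring
lemma hz_zero {z w α : ℝ} (h : z + α ≤ w) : hz z α w = 0 := by
  unfold hz; rw [max_eq_left (by linarith [le_max_right z w])]; simp

lemma hz_eq (z w : ℝ) {α : ℝ} (hα : 0 < α) :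
    hz z α w = α⁻¹ * ∫ x in Set.Ioc z (z+α), (if w ≤ x then (1:ℝ) else 0) := by
  have e : (fun x => if w ≤ x then (1:ℝ) else 0) = (Set.Ici w).indicator (fun _ => (1:ℝ)) := by
    ext x; simp [Set.indicator]
  rw [e, setIntegral_indicator measurableSet_Ici]
  have : (Set.Ioc z (z+α) ∩ Set.Ici w : Set ℝ) =ᵐ[volume] (Set.Ioc (max z w) (z+α) : Set ℝ) := by
    have h1 : (Set.Ici w : Set ℝ) =ᵐ[volume] (Set.Ioi w : Set ℝ) := Ioi_ae_eq_Ici.symm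
    have h2 := (Filter.EventuallyEq.refl (ae volume) (Set.Ioc z (z+α) : Set ℝ)).inter h1
    rw [Set.Ioc_inter_Ioi] at h2
    exact h2
  rw [setIntegral_congr_set this]
  simp only [integral_const, MeasurableSet.univ, measureReal_restrict_apply, Set.univ_inter, Real.volume_real_Ioc,
    smul_eq_mul, mul_one]
  unfold hz
  rw [max_comm]; field_simp

section
variable {Ω : Type*} [MeasurableSpace Ω] {μ : Measure Ω} [IsProbabilityMeasure μ]

lemma F_mono {W : Ω → ℝ} : Monotone (fun x => μ.real {ω | W ω ≤ x}) := by
  intro a b hab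
  exact measureReal_mono (fun ω (h : W ω ≤ a) => h.trans hab)

lemma hz_int {W : Ω → ℝ} (hW : Measurable W) (z t : ℝ) {α : ℝ} (hα : 0 < α) :
    ∫ ω, hz z α (W ω - t) ∂μ = α⁻¹ * ∫ x in z..(z+α), μ.real {ω | W ω ≤ x + t} := by
  simp_rw [hz_eq z _ hα]
  rw [integral_const_mul, integral_integral_swap, intervalIntegral.integral_of_le (by linarith)]
  · congr 2
    ext x
    have : (fun ω => if W ω - t ≤ x then (1:ℝ) else 0) = ({ω | W ω ≤ x + t}).indicator (fun _ => (1:ℝ)) := by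
      ext ω; simp [Set.indicator]
    have hm : MeasurableSet {ω | W ω ≤ x + t} := hW measurableSet_Iic
    rw [this]
    exact integral_indicator_one hm
  · have : Integrable (fun q : Ω × ℝ => if W q.1 - t ≤ q.2 then (1:ℝ) else 0)
        (μ.prod (volume.restrict (Set.Ioc z (z+α)))) := by
      apply Integrable.of_bound (C := 1)
      · apply Measurable.aestronglyMeasurable
        apply Measurable.ite
        · exact measurableSet_le ((hW.comp measurable_fst).sub_const t) measurable_snd
        · exact measurable_const
        · exact measurable_const
      · refine Filter.Eventually.of_forall fun q => ?_
        split_ifs <;> simp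
    exact this

lemma hz_diff1 {W : Ω → ℝ} (hW : Measurable W) (z t : ℝ) {α δ : ℝ} (hα : 0 < α)
    (hF : ∀ x s, |μ.real {ω | W ω ≤ x + s} - μ.real {ω | W ω ≤ x}| ≤ 0.4 * |s| + 2 * δ) :
    |∫ ω, hz z α (W ω) ∂μ - ∫ ω, hz z α (W ω - t) ∂μ| ≤ 0.4 * |t| + 2 * δ := by
  have e0 := hz_int (μ := μ) hW z 0 hα
  simp only [sub_zero, add_zero] at e0
  have m1 : Monotone (fun x => μ.real {ω | W ω ≤ x + t}) := fun a b hab => F_mono (μ := μ) (W := W) (by linarith : a + t ≤ b + t)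
  rw [e0, hz_int hW z t hα, ← mul_sub, ← intervalIntegral.integral_sub F_mono.intervalIntegrable m1.intervalIntegrable,
    abs_mul, abs_of_pos (inv_pos.2 hα)]
  have := intervalIntegral.norm_integral_le_of_norm_le_const (a := z) (b := z + α) (C := 0.4 * |t| + 2 * δ)
    (f := fun x => μ.real {ω | W ω ≤ x} - μ.real {ω | W ω ≤ x + t})
    (fun x _ => by rw [Real.norm_eq_abs, abs_sub_comm]; exact hF x t)
  rw [Real.norm_eq_abs, add_sub_cancel_left, abs_of_pos hα] at this
  rw [inv_mul_le_iff₀ hα]; linarith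

lemma hz_diff2 {W : Ω → ℝ} (hW : Measurable W) (z t : ℝ) {α δ : ℝ} (hα : 0 < α)
    (hF : ∀ x s, |μ.real {ω | W ω ≤ x + s} - μ.real {ω | W ω ≤ x}| ≤ 0.4 * |s| + 2 * δ) :
    |∫ ω, hz z α (W ω) ∂μ - ∫ ω, hz z α (W ω - t) ∂μ| ≤ |t| * (0.4 + 2 * δ / α) := by
  have e0 := hz_int (μ := μ) hW z 0 hα
  simp only [sub_zero, add_zero] at e0
  set F := (fun x => μ.real {ω | W ω ≤ x}) with hFd
  have m0 : Monotone F := F_mono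
  have mi : ∀ a b, IntervalIntegrable F volume a b := fun a b => m0.intervalIntegrable
  have m1 : Monotone (fun x => F (x + α)) := fun a b hab => m0 (by linarith : a + α ≤ b + α)
  have e1 := hz_int (μ := μ) hW z t hα
  have e2 : ∫ x in z..(z+α), μ.real {ω | W ω ≤ x + t} = ∫ x in (z+t)..(z+α+t), F x := by
    rw [← intervalIntegral.integral_comp_add_right]
  have e3 : (∫ x in z..(z+α), F x) - ∫ x in (z+t)..(z+α+t), F x = - ∫ x in z..(z+t), (F (x+α) - F x) := by
    rw [intervalIntegral.integral_sub m1.intervalIntegrable (mi _ _), intervalIntegral.integral_comp_add_right]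
    have a1 := intervalIntegral.integral_add_adjacent_intervals (mi z (z+t)) (mi (z+t) (z+α+t))
    have a2 := intervalIntegral.integral_add_adjacent_intervals (mi z (z+α)) (mi (z+α) (z+α+t))
    rw [show z + t + α = z + α + t by ring]
    linarith
  rw [e0, e1, e2, ← mul_sub, e3, abs_mul, abs_neg, abs_of_pos (inv_pos.2 hα)]
  have := intervalIntegral.norm_integral_le_of_norm_le_const (a := z) (b := z + t) (C := 0.4 * α + 2 * δ)
    (f := fun x => F (x+α) - F x)
    (fun x _ => by have := hF x α; rw [abs_of_pos hα] at this; exact this)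
  rw [Real.norm_eq_abs, add_sub_cancel_left] at this
  rw [inv_mul_le_iff₀ hα]
  calc _ ≤ _ := this
    _ = _ := by field_simp
end

lemma pdf_int : Integrable (fun x : ℝ => (Real.sqrt (2 * Real.pi))⁻¹ * Real.exp (-x ^ 2 / 2)) :=
  gs_int.const_mul _

lemma Phi_lip (x s : ℝ) : |stdGaussianCDF (x + s) - stdGaussianCDF x| ≤ 0.4 * |s| := by
  unfold stdGaussianCDF
  rw [intervalIntegral.integral_Iic_sub_Iic pdf_int.integrableOn pdf_int.integrableOn]
  have := intervalIntegral.norm_integral_le_of_norm_le_const (a := x) (b := x + s) (C := 0.4)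
    (f := fun x => (Real.sqrt (2 * Real.pi))⁻¹ * Real.exp (-x ^ 2 / 2)) ?_
  · rwa [add_sub_cancel_left] at this
  · intro y _
    rw [Real.norm_eq_abs, abs_of_nonneg (by positivity)]
    have h1 : (Real.sqrt (2 * Real.pi))⁻¹ ≤ 0.4 := by
      rw [inv_le_comm₀ (by positivity) (by norm_num)]
      have := sqrt2pi_ge
      norm_num at *; linarith
    have h2 : Real.exp (-y^2/2) ≤ 1 := Real.exp_le_one_iff.2 (by nlinarith [sq_nonneg y])
    calc _ ≤ 0.4 * 1 := mul_le_mul h1 h2 (Real.exp_pos _).le (by norm_num)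
      _ = _ := by norm_num

lemma Phi_nonneg (x : ℝ) : 0 ≤ stdGaussianCDF x := integral_nonneg fun _ => by positivity
lemma Phi_le_one (x : ℝ) : stdGaussianCDF x ≤ 1 := by
  have h := setIntegral_le_integral (s := Set.Iic x) pdf_int (Filter.Eventually.of_forall fun _ => by simp only [Pi.zero_apply]; positivity)
  have e : ∫ x : ℝ, (Real.sqrt (2 * Real.pi))⁻¹ * Real.exp (-x ^ 2 / 2) = 1 := by
    rw [integral_const_mul, gs_total, inv_mul_cancel₀ (by positivity)]
  rw [e] at h
  exact h

lemma hz_m_int (z α : ℝ) (hα : 0 < α) :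
    Integrable (fun x => (Real.sqrt (2 * Real.pi))⁻¹ * Real.exp (-x ^ 2 / 2) * hz z α x) := by
  apply pdf_int.mul_bdd (c := 1) (hz_cont z α).aestronglyMeasurable
  exact Filter.Eventually.of_forall fun x => by
    rw [Real.norm_eq_abs, abs_of_nonneg (hz_nonneg z x hα)]; exact hz_le_one z x hα

lemma hz_m_lo (z : ℝ) {α : ℝ} (hα : 0 < α) :
    stdGaussianCDF z ≤ ∫ x, (Real.sqrt (2 * Real.pi))⁻¹ * Real.exp (-x ^ 2 / 2) * hz z α x := by
  unfold stdGaussianCDF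
  rw [← integral_indicator measurableSet_Iic]
  apply integral_mono (pdf_int.indicator measurableSet_Iic) (hz_m_int z α hα)
  intro x
  simp only [Set.indicator]
  split_ifs with h
  · rw [hz_one hα h, mul_one]
  · have := hz_nonneg z x hα; positivity

lemma hz_m_hi (z : ℝ) {α : ℝ} (hα : 0 < α) :
    ∫ x, (Real.sqrt (2 * Real.pi))⁻¹ * Real.exp (-x ^ 2 / 2) * hz z α x ≤ stdGaussianCDF (z + α) := by
  unfold stdGaussianCDF
  rw [← integral_indicator measurableSet_Iic]
  apply integral_mono (hz_m_int z α hα) (pdf_int.indicator measurableSet_Iic)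
  intro x
  simp only [Set.indicator]
  split_ifs with h
  · exact mul_le_of_le_one_right (by positivity) (hz_le_one z x hα)
  · rw [hz_zero (le_of_lt (not_le.1 h)), mul_zero]

section
variable {Ω : Type*} [MeasurableSpace Ω] {μ : Measure Ω} [IsProbabilityMeasure μ]

lemma hz_W_integrable {W : Ω → ℝ} (hW : Measurable W) (z : ℝ) {α : ℝ} (hα : 0 < α) :
    Integrable (fun ω => hz z α (W ω)) μ := by
  apply Integrable.of_bound (C := 1) ((hz_cont z α).measurable.comp hW).aestronglyMeasurable
  exact Filter.Eventually.of_forall fun x => by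
    rw [Real.norm_eq_abs, Function.comp_apply, abs_of_nonneg (hz_nonneg z _ hα)]; exact hz_le_one z _ hα

lemma hz_W_lo {W : Ω → ℝ} (hW : Measurable W) (z : ℝ) {α : ℝ} (hα : 0 < α) :
    μ.real {ω | W ω ≤ z} ≤ ∫ ω, hz z α (W ω) ∂μ := by
  have hm : MeasurableSet {ω | W ω ≤ z} := hW measurableSet_Iic
  rw [← integral_indicator_one hm]
  apply integral_mono ((integrable_const 1).indicator hm) (hz_W_integrable hW z hα)
  intro x
  simp only [Set.indicator]
  split_ifs with h
  · rw [hz_one hα h]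
  · exact hz_nonneg z _ hα

lemma hz_W_hi {W : Ω → ℝ} (hW : Measurable W) (z : ℝ) {α : ℝ} (hα : 0 < α) :
    ∫ ω, hz z α (W ω) ∂μ ≤ μ.real {ω | W ω ≤ z + α} := by
  have hm : MeasurableSet {ω | W ω ≤ z + α} := hW measurableSet_Iic
  rw [← integral_indicator_one hm]
  apply integral_mono (hz_W_integrable hW z hα) ((integrable_const 1).indicator hm)
  intro x
  simp only [Set.indicator]
  split_ifs with h
  · exact hz_le_one z _ hα
  · exact (hz_zero (le_of_lt (not_le.1 h))).le
end

/-- the kernel -/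
noncomputable def kk (y t : ℝ) : ℝ := if 0 < t ∧ t ≤ y then 1 else if y < t ∧ t ≤ 0 then -1 else 0

noncomputable def clip (y : ℝ) : ℝ := max (-1) (min y 1)

lemma abs_clip (y : ℝ) : |clip y| = min |y| 1 := by
  unfold clip
  rcases le_total 0 y with h | h
  · rw [abs_of_nonneg h, max_eq_right (by linarith [le_min h zero_le_one]), abs_of_nonneg (le_min h zero_le_one)]
  · rw [abs_of_nonpos h, min_eq_left (by linarith : y ≤ 1), abs_of_nonpos (max_le (by norm_num) h), ← min_neg_neg, neg_neg, min_comm]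

lemma clip_sq (y : ℝ) : clip y ^ 2 = min (y^2) 1 := by
  rw [← sq_abs, abs_clip]
  rcases le_total |y| 1 with h | h
  · rw [min_eq_left h, sq_abs, min_eq_left]; rw [← sq_abs]; exact pow_le_one₀ (abs_nonneg _) h
  · rw [min_eq_right h, min_eq_right, one_pow]; rw [← sq_abs]; exact one_le_pow₀ h

lemma sub_clip (y : ℝ) : |y - clip y| = max (|y| - 1) 0 := by
  unfold clip
  rcases le_total y (-1) with h | h
  · rw [min_eq_left (by linarith), max_eq_left h, abs_of_nonpos (by linarith), abs_of_nonpos (by linarith), max_eq_left (by linarith)]; ring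
  · rcases le_total y 1 with h' | h'
    · rw [min_eq_left h', max_eq_right h, sub_self, abs_zero, max_eq_right]; linarith [abs_le.2 ⟨h, h'⟩]
    · rw [min_eq_right h', max_eq_right (by norm_num), abs_of_nonneg (by linarith), abs_of_nonneg (by linarith), max_eq_left (by linarith)]

lemma kk_int (y : ℝ) (g : ℝ → ℝ) :
    ∫ t in Set.Ioc (-1) 1, kk y t * g t = ∫ t in (0:ℝ)..clip y, g t := by
  rcases le_total 0 y with h | h
  · have hc : clip y = min y 1 := by unfold clip; rw [max_eq_right (by linarith [le_min h zero_le_one])]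
    have : (fun t => kk y t * g t) = (Set.Ioc 0 y).indicator g := by
      ext t
      simp only [kk, Set.indicator, Set.mem_Ioc]
      split_ifs with h1 h2
      · simp
      · linarith [h2.1, h2.2]
      · simp
    rw [this, setIntegral_indicator measurableSet_Ioc, Set.Ioc_inter_Ioc, hc,
      intervalIntegral.integral_of_le (le_min h zero_le_one)]
    norm_num [min_comm]
  · have hc : clip y = max (-1) y := by unfold clip; rw [min_eq_left (by linarith)]
    have : (fun t => kk y t * g t) = fun t => - (Set.Ioc y 0).indicator g t := by
      ext t
      simp only [kk, Set.indicator, Set.mem_Ioc]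
      split_ifs with h1 h2 h2
      · linarith [h1.1, h1.2, h2.1, h2.2]
      · linarith [h1.1, h1.2]
      · simp
      · simp
    rw [this, integral_neg, setIntegral_indicator measurableSet_Ioc, Set.Ioc_inter_Ioc, hc,
      intervalIntegral.integral_of_ge (max_le (by norm_num) h)]
    norm_num

lemma kk_sq (y t : ℝ) : kk y t ^ 2 = |kk y t| := by
  unfold kk; split_ifs <;> simp

lemma kk_abs_le (y t : ℝ) : |kk y t| ≤ 1 := by
  unfold kk; split_ifs <;> simp

lemma kk_abs_mul (y t : ℝ) : |t| * |kk y t| = kk y t * t := by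
  unfold kk; split_ifs with h1 h2
  · rw [abs_of_pos h1.1]; simp
  · rw [abs_of_nonpos h2.2]; simp
  · simp

lemma kk_abs_eq (y t : ℝ) : |kk y t| = kk y t * (if 0 < t then 1 else -1) := by
  unfold kk; split_ifs with h1 h2 h3 h4 h5
  all_goals first | (exfalso; linarith [h1.1]) | (exfalso; linarith [h3.2]) | simp

lemma kk_int_abs (y : ℝ) : ∫ t in Set.Ioc (-1) 1, |kk y t| = min |y| 1 := by
  simp_rw [kk_abs_eq]
  rw [kk_int, ← abs_clip]
  rcases le_total 0 (clip y) with h | h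
  · rw [intervalIntegral.integral_of_le h, abs_of_nonneg h,
      setIntegral_congr_fun (g := fun _ => (1:ℝ)) measurableSet_Ioc (fun t ht => by simp [ht.1])]
    simp [h]
  · rw [intervalIntegral.integral_of_ge h, abs_of_nonpos h,
      setIntegral_congr_fun (g := fun _ => (-1:ℝ)) measurableSet_Ioc (fun t ht => by simp [ht.2])]
    simp [h]

lemma kk_int_tabs (y : ℝ) : ∫ t in Set.Ioc (-1) 1, |t| * |kk y t| = min (y^2) 1 / 2 := by
  simp_rw [kk_abs_mul]
  rw [kk_int y (fun t => t), integral_id, clip_sq]; ring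

lemma kk_meas : Measurable (fun q : ℝ × ℝ => kk q.1 q.2) := by
  unfold kk
  apply Measurable.ite
  · exact (measurableSet_lt measurable_const measurable_snd).inter (measurableSet_le measurable_snd measurable_fst)
  · exact measurable_const
  apply Measurable.ite
  · exact (measurableSet_lt measurable_fst measurable_snd).inter (measurableSet_le measurable_snd measurable_const)
  · exact measurable_const
  · exact measurable_const

/-- deterministic Taylor lemma -/
lemma det_lemma {f h : ℝ → ℝ} {m : ℝ} (hc : Continuous h)
    (hd : ∀ w, HasDerivAt f (w * f w + h w - m) w) (hb : ∀ w, |f w| ≤ 2.6)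
    (hb' : ∀ w, |w * f w + h w - m| ≤ 1) (w y : ℝ) :
    |f w - f (w - y) - y * (w * f w + h w - m) + ∫ t in Set.Ioc (-1) 1, kk y t * (h w - h (w - t))|
      ≤ 2 * max (|y| - 1) 0 + (|w| + 2.6) * (min (y^2) 1 / 2) := by
  have hfc : Continuous f := continuous_iff_continuousAt.2 fun w => (hd w).continuousAt
  set f' : ℝ → ℝ := fun w => w * f w + h w - m with hf'
  have hf'c : Continuous f' := by fun_prop
  have hlip : ∀ a b, |f a - f b| ≤ |a - b| := by
    intro a b
    have := Convex.norm_image_sub_le_of_norm_hasDerivWithin_le (f := f) (f' := f') (s := Set.univ) (C := 1)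
      (fun x _ => (hd x).hasDerivWithinAt) (fun x _ => hb' x) convex_univ (Set.mem_univ b) (Set.mem_univ a)
    simpa using this
  have ftc : f w - f (w - y) = ∫ t in (0:ℝ)..y, f' (w - t) := by
    rw [intervalIntegral.integral_comp_sub_left, sub_zero,
      intervalIntegral.integral_eq_sub_of_hasDerivAt (fun x _ => hd x) (hf'c.intervalIntegrable _ _)]
  have ii : ∀ {g : ℝ → ℝ} (_ : Continuous g) (a b : ℝ), IntervalIntegrable g volume a b :=
    fun hg a b => hg.intervalIntegrable a b
  rw [kk_int, ftc]
  have e1 : y * f' w = ∫ t in (0:ℝ)..y, f' w := by simp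
  change |_ - y * f' w + _| ≤ _
  rw [e1, ← intervalIntegral.integral_sub (ii (by fun_prop) _ _) (ii (by fun_prop) _ _),
    ← intervalIntegral.integral_add_adjacent_intervals (b := clip y) (ii (by fun_prop) _ _) (ii (by fun_prop) _ _),
    add_right_comm, ← intervalIntegral.integral_add (ii (by fun_prop) _ _) (ii (by fun_prop) _ _)]
  have b2 : |∫ t in clip y..y, (f' (w - t) - f' w)| ≤ 2 * max (|y| - 1) 0 := by
    rw [← sub_clip, ← Real.norm_eq_abs (∫ t in clip y..y, (f' (w - t) - f' w))]
    apply intervalIntegral.norm_integral_le_of_norm_le_const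
    intro t _
    calc _ ≤ |f' (w-t)| + |f' w| := abs_sub _ _
      _ ≤ 2 := by linarith [hb' (w-t), hb' w]
  have b1 : |∫ t in (0:ℝ)..clip y, (f' (w - t) - f' w + (h w - h (w - t)))| ≤ (|w| + 2.6) * (min (y^2) 1 / 2) := by
    have hpt : ∀ t, |f' (w - t) - f' w + (h w - h (w - t))| ≤ (|w| + 2.6) * |t| := by
      intro t
      have : f' (w - t) - f' w + (h w - h (w - t)) = w * (f (w-t) - f w) - t * f (w - t) := by
        simp only [hf']; ring
      rw [this]
      calc _ ≤ |w * (f (w-t) - f w)| + |t * f (w - t)| := abs_sub _ _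
        _ ≤ |w| * |t| + |t| * 2.6 := by
          rw [abs_mul, abs_mul]
          have := hlip (w-t) w
          rw [show w - t - w = -t by ring, abs_neg] at this
          gcongr
          exact hb _
        _ = _ := by ring
    rw [← kk_int]
    have hgc : Continuous (fun t => f' (w - t) - f' w + (h w - h (w - t))) := by fun_prop
    have hkm : Measurable (fun t => kk y t) := kk_meas.comp (measurable_const.prodMk measurable_id)
    calc _ ≤ ∫ t in Set.Ioc (-1) 1, |kk y t * (f' (w - t) - f' w + (h w - h (w - t)))| := abs_integral_le_integral_abs
      _ ≤ ∫ t in Set.Ioc (-1) 1, (|w| + 2.6) * (|t| * |kk y t|) := by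
        have hI : Integrable (fun t => (|w| + 2.6) * (|t| * |kk y t|)) (volume.restrict (Set.Ioc (-1) 1)) := by
          apply Integrable.const_mul
          apply Integrable.of_bound (C := 1) (by fun_prop)
          filter_upwards [ae_restrict_mem measurableSet_Ioc] with t ht
          rw [Real.norm_eq_abs, abs_mul, abs_abs, abs_abs]
          exact mul_le_one₀ (abs_le.2 ⟨ht.1.le, ht.2⟩) (abs_nonneg _) (kk_abs_le y t)
        have hle : ∀ t, |kk y t * (f' (w - t) - f' w + (h w - h (w - t)))| ≤ (|w| + 2.6) * (|t| * |kk y t|) := by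
          intro t
          rw [abs_mul]
          nlinarith [hpt t, abs_nonneg (kk y t)]
        apply integral_mono _ hI hle
        apply hI.mono' (by fun_prop)
        exact Filter.Eventually.of_forall fun t => by rw [Real.norm_eq_abs, abs_abs]; exact hle t
      _ = _ := by rw [integral_const_mul, kk_int_tabs]
  refine (abs_add_le _ _).trans ?_
  linarith

section
variable {Ω : Type*} [MeasurableSpace Ω] {μ : Measure Ω} [IsProbabilityMeasure μ]
  {ι : Type*} [Fintype ι]

lemma cov_le_half {U V : Ω → ℝ} (hU : MemLp U 2 μ) (hV : MemLp V 2 μ) :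
    covariance U V μ ≤ (variance U μ + variance V μ) / 2 := by
  have h := variance_sub hU hV
  have h0 := variance_nonneg (U - V) μ
  linarith

lemma var_bound {U : ι → Ω → ℝ} (hU : ∀ i, MemLp (U i) 2 μ) (N : ι → ι → Prop) [∀ i j, Decidable (N i j)]
    (hsym : ∀ i j, N i j → N j i)
    (hind : ∀ i j, ¬ N j i → IndepFun (U i) (U j) μ) (κ : ℕ)
    (hκ : ∀ i, (Finset.univ.filter fun j => N j i).card ≤ κ) :
    variance (fun ω => ∑ i, U i ω) μ ≤ κ * ∑ i, ∫ ω, (U i ω)^2 ∂μ := by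
  have e : (fun ω => ∑ i, U i ω) = ∑ i, U i := by ext ω; simp
  rw [e, variance_sum hU]
  have h1 : ∀ i j, covariance (U i) (U j) μ ≤ if N j i then (variance (U i) μ + variance (U j) μ)/2 else 0 := by
    intro i j
    split_ifs with h
    · exact cov_le_half (hU i) (hU j)
    · exact ((hind i j h).covariance_eq_zero (hU i) (hU j)).le
  have hv : ∀ i, variance (U i) μ ≤ ∫ ω, (U i ω)^2 ∂μ := fun i => variance_le_expectation_sq (hU i).1
  have hc : ∀ i, (∑ j, if N j i then variance (U i) μ / 2 else 0) ≤ κ * (variance (U i) μ / 2) := by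
    intro i
    rw [← Finset.sum_filter, Finset.sum_const, nsmul_eq_mul]
    apply mul_le_mul_of_nonneg_right _ (by linarith [variance_nonneg (U i) μ])
    exact_mod_cast hκ i
  calc _ ≤ ∑ i, ∑ j, (if N j i then (variance (U i) μ + variance (U j) μ)/2 else 0) :=
        Finset.sum_le_sum fun i _ => Finset.sum_le_sum fun j _ => h1 i j
    _ = (∑ i, ∑ j, if N j i then variance (U i) μ / 2 else 0) + ∑ i, ∑ j, if N j i then variance (U j) μ / 2 else 0 := by
        simp_rw [← Finset.sum_add_distrib]
        refine Finset.sum_congr rfl fun i _ => Finset.sum_congr rfl fun j _ => ?_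
        split_ifs <;> ring
    _ = (∑ i, ∑ j, if N j i then variance (U i) μ / 2 else 0) + ∑ i, ∑ j, if N j i then variance (U i) μ / 2 else 0 := by
        congr 1
        rw [Finset.sum_comm]
        refine Finset.sum_congr rfl fun i _ => Finset.sum_congr rfl fun j _ => ?_
        simp only [show N i j ↔ N j i from ⟨hsym i j, hsym j i⟩]
    _ ≤ ∑ i, κ * (variance (U i) μ / 2) + ∑ i, κ * (variance (U i) μ / 2) :=
        add_le_add (Finset.sum_le_sum fun i _ => hc i) (Finset.sum_le_sum fun i _ => hc i)
    _ = κ * ∑ i, variance (U i) μ := by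
        rw [← Finset.sum_add_distrib, Finset.mul_sum]; refine Finset.sum_congr rfl fun i _ => by ring
    _ ≤ _ := by
        apply mul_le_mul_of_nonneg_left (Finset.sum_le_sum fun i _ => hv i) (by positivity)

lemma fub {X : Ω → ℝ} (hX : Integrable X μ) {G : Ω × ℝ → ℝ} (hG : Measurable G)
    (hb : ∀ ω, ∀ t ∈ Set.Ioc (-1:ℝ) 1, |G (ω, t)| ≤ 1) :
    Integrable (fun t => ∫ ω, X ω * G (ω, t) ∂μ) (volume.restrict (Set.Ioc (-1) 1)) ∧
    ∫ t in Set.Ioc (-1) 1, ∫ ω, X ω * G (ω, t) ∂μ = ∫ ω, X ω * (∫ t in Set.Ioc (-1) 1, G (ω, t)) ∂μ ∧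
    Integrable (fun ω => X ω * ∫ t in Set.Ioc (-1) 1, G (ω, t)) μ := by
  have hI : Integrable (fun q : Ω × ℝ => X q.1 * G q) (μ.prod (volume.restrict (Set.Ioc (-1) 1))) := by
    apply (hX.comp_fst (volume.restrict (Set.Ioc (-1:ℝ) 1))).mul_bdd (c := 1) hG.aestronglyMeasurable
    have hm : MeasurableSet {q : Ω × ℝ | ‖G q‖ ≤ 1} := measurableSet_le hG.norm measurable_const
    rw [Measure.ae_prod_iff_ae_ae hm]
    refine Filter.Eventually.of_forall fun ω => ?_
    filter_upwards [ae_restrict_mem measurableSet_Ioc] with t ht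
    exact hb ω t ht
  refine ⟨hI.integral_prod_right, ?_, ?_⟩
  · rw [← integral_integral_swap hI]
    congr 1; ext ω; rw [integral_const_mul]
  · have := hI.integral_prod_left
    refine this.congr (Filter.Eventually.of_forall fun ω => ?_)
    simp only [integral_const_mul]

lemma cs_lemma {D Z : Ω → ℝ} (hD : MemLp D 2 μ) (hZ : MemLp Z 2 μ) {c : ℝ} (hc : 0 < c) :
    |∫ ω, D ω * Z ω ∂μ| ≤ (c * ∫ ω, (D ω)^2 ∂μ + (∫ ω, (Z ω)^2 ∂μ) / c) / 2 := by
  calc _ ≤ ∫ ω, |D ω * Z ω| ∂μ := abs_integral_le_integral_abs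
    _ ≤ ∫ ω, (c * (D ω)^2 + (Z ω)^2 / c) / 2 ∂μ := by
      apply integral_mono (hD.integrable_mul hZ).abs
        (((hD.integrable_sq.const_mul c).add (hZ.integrable_sq.div_const c)).div_const 2)
      intro ω
      have h := sq_nonneg (c * |D ω| - |Z ω|)
      change |D ω * Z ω| ≤ (c * (D ω)^2 + (Z ω)^2 / c) / 2
      rw [abs_mul]
      rw [le_div_iff₀ (by norm_num), ← sq_abs (D ω), ← sq_abs (Z ω)]
      have : c * |D ω| ^ 2 + |Z ω|^2 / c - |D ω| * |Z ω| * 2 = (c * |D ω| - |Z ω|)^2 / c := by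
        field_simp; ring
      have h2 : 0 ≤ (c * |D ω| - |Z ω|)^2 / c := by positivity
      linarith
    _ = _ := by
      rw [integral_div, integral_add (hD.integrable_sq.const_mul c) (hZ.integrable_sq.div_const c), integral_const_mul, integral_div]

lemma inf_lambda {x Q : ℝ} (hQ : 0 ≤ Q) (h : ∀ l : ℝ, 0 < l → x ≤ l + Q / (2 * l)) : x ≤ Real.sqrt (2 * Q) := by
  rcases hQ.eq_or_lt with h0 | h0
  · subst h0
    simp only [mul_zero, Real.sqrt_zero]
    apply le_of_forall_pos_le_add
    intro e he
    have := h e he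
    simpa using this
  · have hs : 0 < Real.sqrt (2*Q) := by positivity
    have := h (Real.sqrt (2*Q)/2) (by positivity)
    have hsq := Real.mul_self_sqrt (by positivity : 0 ≤ 2*Q)
    have e : Q / (2 * (Real.sqrt (2*Q)/2)) = Real.sqrt (2*Q) / 2 := by
      rw [div_eq_iff (by positivity)]; nlinarith
    linarith

lemma K_lemma {X Y : ι → Ω → ℝ} {W : Ω → ℝ} (hW : Measurable W) (hY : ∀ i, Measurable (Y i))
    (hX : ∀ i, MemLp (X i) 2 μ) {z α δ : ℝ} (hα : 0 < α) (hδ : 0 ≤ δ)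
    (hF : ∀ x s, |μ.real {ω | W ω ≤ x + s} - μ.real {ω | W ω ≤ x}| ≤ 0.4 * |s| + 2 * δ) (κ : ℕ)
    (hvar : ∀ t, variance (fun ω => ∑ i, X i ω * kk (Y i ω) t) μ ≤ κ * ∑ i, ∫ ω, (X i ω * kk (Y i ω) t)^2 ∂μ) :
    |∑ i, ∫ ω, X i ω * (∫ t in Set.Ioc (-1) 1, kk (Y i ω) t * (hz z α (W ω) - hz z α (W ω - t))) ∂μ| ≤
      (0.2 + δ / α) * ∑ i, ∫ ω, |X i ω| * min ((Y i ω)^2) 1 ∂μ +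
      Real.sqrt (2 * (κ * (0.2 * (∑ i, ∫ ω, (X i ω)^2 * min ((Y i ω)^2) 1 ∂μ) + 2 * δ * ∑ i, ∫ ω, (X i ω)^2 * min |Y i ω| 1 ∂μ))) := by
  set h := hz z α with hh
  have hX1 : ∀ i, Integrable (X i) μ := fun i => (hX i).integrable (by norm_num)
  have hX2 : ∀ i, Integrable (fun ω => (X i ω)^2) μ := fun i => (hX i).integrable_sq
  have hkm : ∀ i, Measurable (fun q : Ω × ℝ => kk (Y i q.1) q.2) := fun i =>
    kk_meas.comp (((hY i).comp measurable_fst).prodMk measurable_snd)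
  have hkmt : ∀ i t, Measurable (fun ω : Ω => kk (Y i ω) t) := fun i t =>
    kk_meas.comp ((hY i).prodMk measurable_const)
  have hhm : Measurable h := (hz_cont z α).measurable
  have hD1 : ∀ w t, |h w - h (w - t)| ≤ 1 := by
    intro w t
    rw [abs_le]
    constructor <;> linarith [hz_nonneg z w hα, hz_nonneg z (w-t) hα, hz_le_one z w hα, hz_le_one z (w-t) hα]
  have tle : ∀ t ∈ Set.Ioc (-1:ℝ) 1, |t| ≤ 1 := fun t ht => abs_le.2 ⟨ht.1.le, ht.2⟩
  -- Fubini facts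
  have f0 := fun i => fub (μ := μ) (hX1 i) (G := fun q => kk (Y i q.1) q.2 * (h (W q.1) - h (W q.1 - q.2)))
    ((hkm i).mul (by fun_prop)) (fun ω t _ => by
      rw [abs_mul]; exact mul_le_one₀ (kk_abs_le _ _) (abs_nonneg _) (hD1 _ _))
  have f1 := fun i => fub (μ := μ) (hX1 i).abs (G := fun q => |q.2| * |kk (Y i q.1) q.2|)
    (by have := hkm i; fun_prop) (fun ω t ht => by
      rw [abs_mul, abs_abs, abs_abs]; exact mul_le_one₀ (tle t ht) (abs_nonneg _) (kk_abs_le _ _))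
  have f2 := fun i => fub (μ := μ) (hX2 i) (G := fun q => |q.2| * |kk (Y i q.1) q.2|)
    (by have := hkm i; fun_prop) (fun ω t ht => by
      rw [abs_mul, abs_abs, abs_abs]; exact mul_le_one₀ (tle t ht) (abs_nonneg _) (kk_abs_le _ _))
  have f3 := fun i => fub (μ := μ) (hX2 i) (G := fun q => |kk (Y i q.1) q.2|)
    (by have := hkm i; fun_prop) (fun ω t ht => by
      rw [abs_abs]; exact (kk_abs_le _ _))
  simp only [kk_int_abs, kk_int_tabs] at f1 f2 f3
  -- pointwise in t
  have hpt : ∀ l : ℝ, 0 < l → ∀ t : ℝ,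
      |∑ i, ∫ ω, X i ω * (kk (Y i ω) t * (h (W ω) - h (W ω - t))) ∂μ| ≤
      l / 2 + (κ / (2*l)) * (0.4 * (∑ i, ∫ ω, (X i ω)^2 * (|t| * |kk (Y i ω) t|) ∂μ) + 2 * δ * ∑ i, ∫ ω, (X i ω)^2 * |kk (Y i ω) t| ∂μ)
      + (0.4 + 2 * δ / α) * ∑ i, ∫ ω, |X i ω| * (|t| * |kk (Y i ω) t|) ∂μ := by
    intro l hl t
    rcases eq_or_ne t 0 with rfl | ht
    · simp only [sub_zero, sub_self, mul_zero, integral_zero, Finset.sum_const_zero, abs_zero, zero_mul, zero_add]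
      have a1 : 0 ≤ ∑ i, ∫ ω, (X i ω)^2 * |kk (Y i ω) 0| ∂μ :=
        Finset.sum_nonneg fun i _ => integral_nonneg fun ω => by positivity
      positivity
    set D : Ω → ℝ := fun ω => h (W ω) - h (W ω - t) with hD
    set U : ι → Ω → ℝ := fun i ω => X i ω * kk (Y i ω) t with hU
    have hUL : ∀ i, MemLp (U i) 2 μ := by
      intro i
      apply (hX i).mono ((hX i).1.mul (hkmt i t).aestronglyMeasurable)
      refine Filter.Eventually.of_forall fun ω => ?_
      rw [Pi.mul_apply, norm_mul]
      exact mul_le_of_le_one_right (norm_nonneg _) (kk_abs_le _ _)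
    have hDm : Measurable D := by fun_prop
    have hDL : MemLp D 2 μ := MemLp.of_bound hDm.aestronglyMeasurable 1 (Filter.Eventually.of_forall fun ω => hD1 _ _)
    have hSL : MemLp (fun ω => ∑ i, U i ω) 2 μ := memLp_finsetSum _ fun i _ => hUL i
    set M := ∫ ω, ∑ i, U i ω ∂μ with hM
    have hZL : MemLp (fun ω => ∑ i, U i ω - M) 2 μ := hSL.sub (memLp_const M)
    have hDI : ∫ ω, D ω ∂μ = ∫ ω, h (W ω) ∂μ - ∫ ω, h (W ω - t) ∂μ :=
      integral_sub (hz_W_integrable hW z hα) (hz_W_integrable (hW.sub_const t) z hα)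
    have d1 : |∫ ω, D ω ∂μ| ≤ 0.4 * |t| + 2 * δ := by rw [hDI]; exact hz_diff1 hW z t hα hF
    have d2 : |∫ ω, D ω ∂μ| ≤ |t| * (0.4 + 2 * δ / α) := by rw [hDI]; exact hz_diff2 hW z t hα hF
    have dsq : ∫ ω, (D ω)^2 ∂μ ≤ 0.4 * |t| + 2 * δ := by
      refine le_trans ?_ d1
      rcases le_total 0 t with h0 | h0
      · have : ∀ ω, D ω ≤ 0 := fun ω => sub_nonpos.2 (hz_anti z hα (by linarith))
        refine le_trans ?_ (neg_le_abs _)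
        rw [← integral_neg]
        apply integral_mono hDL.integrable_sq (hDL.integrable (by norm_num)).neg
        intro ω
        have a := this ω
        have b := (abs_le.1 (hD1 (W ω) t)).1
        change -1 ≤ D ω at b
        simp only [Pi.neg_apply]
        nlinarith
      · have : ∀ ω, 0 ≤ D ω := fun ω => sub_nonneg.2 (hz_anti z hα (by linarith))
        refine le_trans ?_ (le_abs_self _)
        apply integral_mono hDL.integrable_sq (hDL.integrable (by norm_num))
        intro ω
        have a := this ω
        have b := (abs_le.1 (hD1 (W ω) t)).2
        change D ω ≤ 1 at b
        simp only
        nlinarith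
    have eq1 : ∑ i, ∫ ω, X i ω * (kk (Y i ω) t * (h (W ω) - h (W ω - t))) ∂μ =
        ∫ ω, D ω * (∑ i, U i ω - M) ∂μ + M * ∫ ω, D ω ∂μ := by
      have hDZ : Integrable (fun ω => D ω * (∑ i, U i ω - M)) μ := hDL.integrable_mul hZL
      rw [← integral_const_mul, ← integral_add hDZ ((hDL.integrable (by norm_num)).const_mul M),
        ← integral_finsetSum]
      · congr 1; ext ω
        rw [mul_sub, Finset.mul_sum, mul_comm M, sub_add_cancel]
        refine Finset.sum_congr rfl fun i _ => ?_
        simp only [hU, hD]; ring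
      · intro i _
        refine (hDL.integrable_mul (hUL i)).congr (Filter.Eventually.of_forall fun ω => ?_)
        simp only [hU, hD, Pi.mul_apply]; ring
    have hv : ∫ ω, (∑ i, U i ω - M)^2 ∂μ ≤ κ * ∑ i, ∫ ω, (X i ω)^2 * |kk (Y i ω) t| ∂μ := by
      have e := variance_eq_integral (μ := μ) (X := fun ω => ∑ i, U i ω) hSL.1.aemeasurable
      rw [← e]
      refine (hvar t).trans_eq ?_
      simp_rw [mul_pow, kk_sq]
    set E2 := ∑ i, ∫ ω, (X i ω)^2 * |kk (Y i ω) t| ∂μ with hE2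
    have hE2t : ∑ i, ∫ ω, (X i ω)^2 * (|t| * |kk (Y i ω) t|) ∂μ = |t| * E2 := by
      rw [hE2, Finset.mul_sum]
      refine Finset.sum_congr rfl fun i _ => ?_
      rw [← integral_const_mul]; congr 1; ext ω; ring
    have hE1t : ∑ i, ∫ ω, |X i ω| * (|t| * |kk (Y i ω) t|) ∂μ = |t| * ∑ i, ∫ ω, |U i ω| ∂μ := by
      rw [Finset.mul_sum]
      refine Finset.sum_congr rfl fun i _ => ?_
      rw [← integral_const_mul]; congr 1; ext ω; simp only [hU, abs_mul]; ring
    have hMb : |M| ≤ ∑ i, ∫ ω, |U i ω| ∂μ := by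
      rw [hM, integral_finsetSum _ fun i _ => (hUL i).integrable (by norm_num)]
      refine (Finset.abs_sum_le_sum_abs _ _).trans (Finset.sum_le_sum fun i _ => abs_integral_le_integral_abs)
    have htp : 0 < |t| := abs_pos.2 ht
    set θ := 0.4 * |t| + 2 * δ with hθ
    have hθp : 0 < θ := by positivity
    have hcs := cs_lemma hDL hZL (c := l / θ) (by positivity)
    rw [eq1, hE2t, hE1t]
    have b1 : l / θ * ∫ ω, (D ω)^2 ∂μ ≤ l := by
      calc _ ≤ l / θ * θ := by gcongr
        _ = l := by field_simp
    have b2 : (∫ ω, (∑ i, U i ω - M)^2 ∂μ) / (l / θ) ≤ κ * E2 / (l / θ) := by gcongr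
    have b3 : |M * ∫ ω, D ω ∂μ| ≤ (∑ i, ∫ ω, |U i ω| ∂μ) * (|t| * (0.4 + 2 * δ / α)) := by
      rw [abs_mul]
      exact mul_le_mul hMb d2 (abs_nonneg _) ((abs_nonneg _).trans hMb)
    refine (abs_add_le _ _).trans ?_
    have e4 : κ * E2 / (l / θ) / 2 = (κ / (2*l)) * (0.4 * (|t| * E2) + 2 * δ * E2) := by
      rw [hθ]; field_simp
    linarith
  -- integrate
  set S := ∑ i, ∫ ω, |X i ω| * min ((Y i ω)^2) 1 ∂μ with hS
  set T6 := ∑ i, ∫ ω, (X i ω)^2 * min ((Y i ω)^2) 1 ∂μ with hT6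
  set T5 := ∑ i, ∫ ω, (X i ω)^2 * min |Y i ω| 1 ∂μ with hT5
  have hT50 : 0 ≤ T5 := Finset.sum_nonneg fun i _ => integral_nonneg fun ω => by positivity
  have hT60 : 0 ≤ T6 := Finset.sum_nonneg fun i _ => integral_nonneg fun ω => by positivity
  rw [add_comm, ← sub_le_iff_le_add]
  apply inf_lambda (by positivity)
  intro l hl
  have e0 : ∑ i, ∫ ω, X i ω * (∫ t in Set.Ioc (-1) 1, kk (Y i ω) t * (h (W ω) - h (W ω - t))) ∂μ =
      ∫ t in Set.Ioc (-1) 1, ∑ i, ∫ ω, X i ω * (kk (Y i ω) t * (h (W ω) - h (W ω - t))) ∂μ := by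
    rw [integral_finsetSum _ fun i _ => (f0 i).1]
    exact Finset.sum_congr rfl fun i _ => (f0 i).2.1.symm
  have i0 : Integrable (fun t => ∑ i, ∫ ω, X i ω * (kk (Y i ω) t * (h (W ω) - h (W ω - t))) ∂μ) (volume.restrict (Set.Ioc (-1) 1)) :=
    integrable_finsetSum _ fun i _ => (f0 i).1
  have i1 : Integrable (fun t => ∑ i, ∫ ω, |X i ω| * (|t| * |kk (Y i ω) t|) ∂μ) (volume.restrict (Set.Ioc (-1) 1)) :=
    integrable_finsetSum _ fun i _ => (f1 i).1
  have i2 : Integrable (fun t => ∑ i, ∫ ω, (X i ω)^2 * (|t| * |kk (Y i ω) t|) ∂μ) (volume.restrict (Set.Ioc (-1) 1)) :=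
    integrable_finsetSum _ fun i _ => (f2 i).1
  have i3 : Integrable (fun t => ∑ i, ∫ ω, (X i ω)^2 * |kk (Y i ω) t| ∂μ) (volume.restrict (Set.Ioc (-1) 1)) :=
    integrable_finsetSum _ fun i _ => (f3 i).1
  have v1 : ∫ t in Set.Ioc (-1) 1, ∑ i, ∫ ω, |X i ω| * (|t| * |kk (Y i ω) t|) ∂μ = S / 2 := by
    rw [integral_finsetSum _ fun i _ => (f1 i).1, hS, Finset.sum_div]
    refine Finset.sum_congr rfl fun i _ => ?_
    rw [(f1 i).2.1, ← integral_div]; congr 1; ext ω; ring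
  have v2 : ∫ t in Set.Ioc (-1) 1, ∑ i, ∫ ω, (X i ω)^2 * (|t| * |kk (Y i ω) t|) ∂μ = T6 / 2 := by
    rw [integral_finsetSum _ fun i _ => (f2 i).1, hT6, Finset.sum_div]
    refine Finset.sum_congr rfl fun i _ => ?_
    rw [(f2 i).2.1, ← integral_div]; congr 1; ext ω; ring
  have v3 : ∫ t in Set.Ioc (-1) 1, ∑ i, ∫ ω, (X i ω)^2 * |kk (Y i ω) t| ∂μ = T5 := by
    rw [integral_finsetSum _ fun i _ => (f3 i).1, hT5]
    refine Finset.sum_congr rfl fun i _ => (f3 i).2.1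
  rw [e0]
  have i23 := (i2.const_mul 0.4).add (i3.const_mul (2*δ))
  have iA : Integrable (fun _ : ℝ => l/2) (volume.restrict (Set.Ioc (-1:ℝ) 1)) := integrable_const _
  have iB := i23.const_mul (κ / (2*l))
  have iC := i1.const_mul (0.4 + 2*δ/α)
  have main := (abs_integral_le_integral_abs (f := fun t => ∑ i, ∫ ω, X i ω * (kk (Y i ω) t * (h (W ω) - h (W ω - t))) ∂μ)
      (μ := volume.restrict (Set.Ioc (-1) 1))).trans
    (integral_mono i0.abs ((iA.add iB).add iC) (fun t => hpt l hl t))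
  rw [integral_add' (iA.add iB) iC, integral_add' iA iB, integral_const_mul, integral_const_mul,
    integral_add' (i2.const_mul 0.4) (i3.const_mul (2*δ)), integral_const_mul, integral_const_mul, v1, v2, v3] at main
  have vl : ∫ _ in Set.Ioc (-1:ℝ) 1, l / 2 = l := by
    simp; ring
  rw [vl] at main
  have e5 : (κ * (0.2 * T6 + 2 * δ * T5)) / (2 * l) = κ / (2*l) * (0.4 * (T6/2) + 2 * δ * T5) := by ring
  have e6 : (0.4 + 2*δ/α) * (S/2) = (0.2 + δ/α) * S := by ring
  rw [e5]
  linarith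
end

lemma pw1 {b q : ℝ} (hb : 0 ≤ b) (hq : 2 < q) (hq3 : q ≤ 3) : min (b^2) 1 + max (b-1) 0 ≤ b ^ (q-1) := by
  rcases le_total b 1 with h | h
  · rw [max_eq_right (by linarith), add_zero]
    refine (min_le_left _ _).trans ?_
    have := Real.rpow_le_rpow_of_exponent_ge' hb h (by linarith : 0 ≤ q - 1) (by linarith : q - 1 ≤ 2)
    exact_mod_cast this
  · rw [max_eq_left (by linarith), min_eq_right (by nlinarith)]
    have := Real.rpow_le_rpow_of_exponent_le h (by linarith : 1 ≤ q - 1)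
    rw [Real.rpow_one] at this
    linarith

lemma pw2 {b q : ℝ} (hb : 0 ≤ b) (hq : 2 < q) (hq3 : q ≤ 3) : min b 1 ≤ b ^ (q-2) := by
  rcases le_total b 1 with h | h
  · refine (min_le_left _ _).trans ?_
    have := Real.rpow_le_rpow_of_exponent_ge' hb h (by linarith : 0 ≤ q - 2) (by linarith : q - 2 ≤ 1)
    rwa [Real.rpow_one] at this
  · refine (min_le_right _ _).trans ?_
    exact Real.one_le_rpow h (by linarith)

lemma pw3 {b p : ℝ} (hb : 0 ≤ b) (hp : 2 < p) (hp4 : p ≤ 4) : min (b^2) 1 ≤ b ^ (p-2) := by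
  rcases le_total b 1 with h | h
  · refine (min_le_left _ _).trans ?_
    have := Real.rpow_le_rpow_of_exponent_ge' hb h (by linarith : 0 ≤ p - 2) (by linarith : p - 2 ≤ 2)
    exact_mod_cast this
  · refine (min_le_right _ _).trans ?_
    exact Real.one_le_rpow h (by linarith)

lemma max_rpow_le {x y q : ℝ} (hx : 0 ≤ x) (hy : 0 ≤ y) : (max x y) ^ q ≤ x ^ q + y ^ q := by
  have h1 := Real.rpow_nonneg hx q
  have h2 := Real.rpow_nonneg hy q
  rcases le_total x y with h | h
  · rw [max_eq_right h]; linarith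
  · rw [max_eq_left h]; linarith

lemma yg1 {a b q : ℝ} (ha : 0 ≤ a) (hb : 0 ≤ b) (hq : 2 < q) : a * b ^ (q-1) ≤ a ^ q + b ^ q := by
  refine le_trans ?_ (max_rpow_le ha hb)
  have hM : 0 ≤ max a b := le_max_of_le_left ha
  calc _ ≤ max a b * (max a b) ^ (q-1) := mul_le_mul (le_max_left _ _)
        (Real.rpow_le_rpow hb (le_max_right _ _) (by linarith)) (by positivity) hM
    _ = _ := by rw [← Real.rpow_one_add' hM (by linarith)]; ring_nf

lemma yg2 {a b q : ℝ} (ha : 0 ≤ a) (hb : 0 ≤ b) (hq : 2 < q) : a^2 * b ^ (q-2) ≤ a ^ q + b ^ q := by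
  refine le_trans ?_ (max_rpow_le ha hb)
  have hM : 0 ≤ max a b := le_max_of_le_left ha
  calc _ ≤ (max a b)^2 * (max a b) ^ (q-2) := mul_le_mul (pow_le_pow_left₀ ha (le_max_left _ _) 2)
        (Real.rpow_le_rpow hb (le_max_right _ _) (by linarith)) (by positivity) (by positivity)
    _ = (max a b)^(2:ℝ) * (max a b) ^ (q-2) := by norm_cast
    _ = _ := by rw [← Real.rpow_add' hM (by linarith)]; ring_nf

lemma yg3 {x a b q : ℝ} (hx : 0 ≤ x) (ha : 0 ≤ a) (hb : 0 ≤ b) (hq : 2 < q) :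
    x * (a * b ^ (q-2)) ≤ x ^ q + (a ^ q + b ^ q) := by
  have h1 : x * (a * b ^ (q-2)) ≤ (max x a)^2 * b ^ (q-2) := by
    rw [← mul_assoc, sq]
    gcongr
    · exact le_max_left _ _
    · exact le_max_right _ _
  have h2 := yg2 (le_max_of_le_left hx : 0 ≤ max x a) hb hq
  have h3 := max_rpow_le (q := q) hx ha
  linarith

lemma half_amgm {a b p : ℝ} (ha : 0 ≤ a) (hb : 0 ≤ b) : (a*b) ^ (p/2) ≤ (a^p + b^p)/2 := by
  rw [Real.mul_rpow ha hb]
  have e : ∀ c : ℝ, 0 ≤ c → c ^ p = (c^(p/2))^2 := by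
    intro c hc
    rw [← Real.rpow_natCast, ← Real.rpow_mul hc]; norm_num
  rw [e a ha, e b hb]
  nlinarith [sq_nonneg (a^(p/2) - b^(p/2))]

lemma pw4 {u q : ℝ} (hu : 0 ≤ u) (hq : 2 < q) : max (u - 1) 0 ≤ u ^ (q/2) := by
  apply max_le _ (Real.rpow_nonneg hu _)
  rcases le_total u 1 with h | h
  · linarith [Real.rpow_nonneg hu (q/2)]
  · have := Real.rpow_le_rpow_of_exponent_le h (by linarith : 1 ≤ q/2)
    rw [Real.rpow_one] at this
    linarith

lemma pw5 {u p : ℝ} (hu : 0 ≤ u) (hp : 2 < p) (hp4 : p ≤ 4) : min (u^2) 1 ≤ u ^ (p/2) := by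
  rcases le_total u 1 with h | h
  · refine (min_le_left _ _).trans ?_
    have := Real.rpow_le_rpow_of_exponent_ge' hu h (by linarith : 0 ≤ p/2) (by linarith : p/2 ≤ 2)
    exact_mod_cast this
  · refine (min_le_right _ _).trans ?_
    exact Real.one_le_rpow h (by linarith)

section
variable {Ω : Type*} [MeasurableSpace Ω] {μ : Measure Ω} [IsProbabilityMeasure μ]

lemma memLp_of_int {X : Ω → ℝ} (hm : Measurable X) {p : ℝ} (hp : 0 < p) (h : Integrable (fun ω => |X ω| ^ p) μ) :
    MemLp X (ENNReal.ofReal p) μ := by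
  rw [← integrable_norm_rpow_iff hm.aestronglyMeasurable (by simpa using hp) (by simp)]
  simpa [ENNReal.toReal_ofReal hp.le] using h

lemma int_of_memLp {X : Ω → ℝ} {p q : ℝ} (hq : 0 < q) (hqp : q ≤ p) (h : MemLp X (ENNReal.ofReal p) μ) :
    Integrable (fun ω => |X ω| ^ q) μ := by
  have h' := (h.mono_exponent (ENNReal.ofReal_le_ofReal hqp)).integrable_norm_rpow (by simpa using hq) (by simp)
  simpa [ENNReal.toReal_ofReal hq.le] using h'

variable {ι : Type*} [Fintype ι] [DecidableEq ι]

/-- independence of functions of `(X i, Y i)` and `(X j, Y j)` -/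
lemma ind_pair {X : ι → Ω → ℝ} {A B : ι → Finset ι} (hiA : ∀ i, i ∈ A i) (hAB : ∀ i, A i ⊆ B i)
    (hLD2 : ∀ i, IndepFun (fun ω => fun j : (A i : Finset ι) => X j.1 ω)
      (fun ω => fun j : ((B i)ᶜ : Finset ι) => X j.1 ω) μ)
    {Y : ι → Ω → ℝ} (hY : ∀ i ω, Y i ω = ∑ j ∈ A i, X j ω)
    {φ : ℝ × ℝ → ℝ} (hφ : Measurable φ) (i j : ι) (hij : ¬ (B j ∩ B i).Nonempty) :
    IndepFun (fun ω => φ (X i ω, Y i ω)) (fun ω => φ (X j ω, Y j ω)) μ := by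
  have hsub : ∀ l ∈ A j, l ∈ (B i)ᶜ := by
    intro l hl
    rw [Finset.mem_compl]
    intro hl'
    exact hij ⟨l, Finset.mem_inter.2 ⟨hAB j hl, hl'⟩⟩
  have h := (hLD2 i).comp (φ := fun v => φ (v ⟨i, hiA i⟩, ∑ l : (A i : Finset ι), v l))
    (ψ := fun v => φ (v ⟨j, hsub j (hiA j)⟩, ∑ l : (A j : Finset ι), v ⟨l.1, hsub l.1 l.2⟩))
    (by fun_prop) (by fun_prop)
  convert h using 1
  · ext ω; simp only [Function.comp, hY]; rw [Finset.sum_coe_sort (A i) (fun l => X l ω)]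
  · ext ω; simp only [Function.comp, hY]; rw [Finset.sum_coe_sort (A j) (fun l => X l ω)]

lemma ind_Z {X : ι → Ω → ℝ} {A B : ι → Finset ι} (hiA : ∀ i, i ∈ A i)
    (hLD2 : ∀ i, IndepFun (fun ω => fun j : (A i : Finset ι) => X j.1 ω)
      (fun ω => fun j : ((B i)ᶜ : Finset ι) => X j.1 ω) μ)
    {Y : ι → Ω → ℝ} (hY : ∀ i ω, Y i ω = ∑ j ∈ A i, X j ω)
    {φ : ℝ × ℝ → ℝ} (hφ : Measurable φ) (i : ι) :
    IndepFun (fun ω => |∑ l ∈ (B i)ᶜ, X l ω|) (fun ω => φ (X i ω, Y i ω)) μ := by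
  have h := (hLD2 i).comp (φ := fun v => φ (v ⟨i, hiA i⟩, ∑ l : (A i : Finset ι), v l))
    (ψ := fun v => |∑ l : ((B i)ᶜ : Finset ι), v l|)
    (by fun_prop) (by fun_prop)
  refine IndepFun.symm ?_
  convert h using 1
  · ext ω; simp only [Function.comp, hY]; rw [Finset.sum_coe_sort (A i) (fun l => X l ω)]
  · ext ω; simp only [Function.comp]; rw [Finset.sum_coe_sort ((B i)ᶜ) (fun l => X l ω)]

lemma ind_W {X : ι → Ω → ℝ} {A : ι → Finset ι}
    (hLD1 : ∀ i, IndepFun (X i) (fun ω => fun j : ((A i)ᶜ : Finset ι) => X j.1 ω) μ)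
    {W : Ω → ℝ} (hW : ∀ ω, W ω = ∑ i, X i ω)
    {Y : ι → Ω → ℝ} (hY : ∀ i ω, Y i ω = ∑ j ∈ A i, X j ω)
    {f : ℝ → ℝ} (hf : Measurable f) (i : ι) :
    IndepFun (X i) (fun ω => f (W ω - Y i ω)) μ := by
  have h := (hLD1 i).comp (φ := id) (ψ := fun v => f (∑ l : ((A i)ᶜ : Finset ι), v l))
    (by fun_prop) (by fun_prop)
  have e : (fun ω => f (W ω - Y i ω)) =
      (fun v => f (∑ l : ((A i)ᶜ : Finset ι), v l)) ∘ (fun ω => fun j : ((A i)ᶜ : Finset ι) => X j.1 ω) := by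
    ext ω
    simp only [Function.comp, hW, hY]
    rw [Finset.sum_coe_sort ((A i)ᶜ) (fun l => X l ω), ← Finset.sum_add_sum_compl (A i) (fun l => X l ω), add_sub_cancel_left]
  rw [e]; exact h

end

section
variable {Ω : Type*} [MeasurableSpace Ω] {μ : Measure Ω} [IsProbabilityMeasure μ]

/-- domination by a sum of two integrable powers -/
lemma dom_int {g X Y : Ω → ℝ} {q : ℝ} (hg : Measurable g) (h0 : ∀ ω, 0 ≤ g ω)
    (hX : Integrable (fun ω => |X ω| ^ q) μ) (hY : Integrable (fun ω => |Y ω| ^ q) μ)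
    (h : ∀ ω, g ω ≤ |X ω| ^ q + |Y ω| ^ q) :
    Integrable g μ ∧ ∫ ω, g ω ∂μ ≤ (∫ ω, |X ω| ^ q ∂μ) + ∫ ω, |Y ω| ^ q ∂μ := by
  have hi : Integrable g μ := (hX.add hY).mono' hg.aestronglyMeasurable
    (Filter.Eventually.of_forall fun ω => by rw [Real.norm_of_nonneg (h0 ω)]; exact h ω)
  refine ⟨hi, ?_⟩
  rw [← integral_add hX hY]
  exact integral_mono hi (hX.add hY) h

lemma mom1 {X Y : Ω → ℝ} {q : ℝ} (hX : Measurable X) (hY : Measurable Y)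
    (hXq : Integrable (fun ω => |X ω| ^ q) μ) (hYq : Integrable (fun ω => |Y ω| ^ q) μ)
    (hq : 2 < q) (hq3 : q ≤ 3) :
    Integrable (fun ω => |X ω| * min ((Y ω)^2) 1) μ ∧ Integrable (fun ω => |X ω| * max (|Y ω| - 1) 0) μ ∧
    (∫ ω, |X ω| * min ((Y ω)^2) 1 ∂μ) + (∫ ω, |X ω| * max (|Y ω| - 1) 0 ∂μ) ≤
      (∫ ω, |X ω| ^ q ∂μ) + ∫ ω, |Y ω| ^ q ∂μ := by
  have key : ∀ ω, |X ω| * min ((Y ω)^2) 1 + |X ω| * max (|Y ω| - 1) 0 ≤ |X ω| ^ q + |Y ω| ^ q := by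
    intro ω
    have h1 := pw1 (abs_nonneg (Y ω)) hq hq3
    rw [sq_abs] at h1
    have h2 := yg1 (abs_nonneg (X ω)) (abs_nonneg (Y ω)) hq
    have := mul_le_mul_of_nonneg_left h1 (abs_nonneg (X ω))
    linarith
  have n1 : ∀ ω, 0 ≤ |X ω| * min ((Y ω)^2) 1 := fun ω => by positivity
  have n2 : ∀ ω, 0 ≤ |X ω| * max (|Y ω| - 1) 0 := fun ω => by positivity
  have i1 := dom_int (by fun_prop) n1 hXq hYq (fun ω => by linarith [key ω, n2 ω])
  have i2 := dom_int (by fun_prop) n2 hXq hYq (fun ω => by linarith [key ω, n1 ω])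
  refine ⟨i1.1, i2.1, ?_⟩
  rw [← integral_add i1.1 i2.1, ← integral_add hXq hYq]
  exact integral_mono (i1.1.add i2.1) (hXq.add hYq) key

lemma mom2 {X Y : Ω → ℝ} {q : ℝ} (hX : Measurable X) (hY : Measurable Y)
    (hXq : Integrable (fun ω => |X ω| ^ q) μ) (hYq : Integrable (fun ω => |Y ω| ^ q) μ)
    (hq : 2 < q) (hq3 : q ≤ 3) :
    (∫ ω, (X ω)^2 * min |Y ω| 1 ∂μ) ≤ (∫ ω, |X ω| ^ q ∂μ) + ∫ ω, |Y ω| ^ q ∂μ := by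
  refine (dom_int (by fun_prop) (fun ω => by positivity) hXq hYq (fun ω => ?_)).2
  have h1 := pw2 (abs_nonneg (Y ω)) hq hq3
  have h2 := yg2 (abs_nonneg (X ω)) (abs_nonneg (Y ω)) hq
  rw [sq_abs] at h2
  have := mul_le_mul_of_nonneg_left h1 (sq_nonneg (X ω))
  linarith

lemma mom3 {X Y : Ω → ℝ} {p : ℝ} (hX : Measurable X) (hY : Measurable Y)
    (hXq : Integrable (fun ω => |X ω| ^ p) μ) (hYq : Integrable (fun ω => |Y ω| ^ p) μ)
    (hp : 2 < p) (hp4 : p ≤ 4) :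
    (∫ ω, (X ω)^2 * min ((Y ω)^2) 1 ∂μ) ≤ (∫ ω, |X ω| ^ p ∂μ) + ∫ ω, |Y ω| ^ p ∂μ := by
  refine (dom_int (by fun_prop) (fun ω => by positivity) hXq hYq (fun ω => ?_)).2
  have h1 := pw3 (abs_nonneg (Y ω)) hp hp4
  have h2 := yg2 (abs_nonneg (X ω)) (abs_nonneg (Y ω)) hp
  rw [sq_abs] at h1 h2
  have := mul_le_mul_of_nonneg_left h1 (sq_nonneg (X ω))
  linarith

/-- `E|X_j| V_i` and `E|X_j| E V_i` -/
lemma mom4 {T X Y : Ω → ℝ} {q : ℝ} (hT : Measurable T) (hX : Measurable X) (hY : Measurable Y)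
    (hTq : Integrable (fun ω => |T ω| ^ q) μ) (hTi : Integrable T μ)
    (hXq : Integrable (fun ω => |X ω| ^ q) μ) (hYq : Integrable (fun ω => |Y ω| ^ q) μ)
    (hq : 2 < q) (hq3 : q ≤ 3) :
    Integrable (fun ω => |T ω| * (|X ω| * min ((Y ω)^2) 1)) μ ∧
    (∫ ω, |T ω| * (|X ω| * min ((Y ω)^2) 1) ∂μ) ≤
      (∫ ω, |T ω| ^ q ∂μ) + ((∫ ω, |X ω| ^ q ∂μ) + ∫ ω, |Y ω| ^ q ∂μ) ∧
    (∫ ω, |T ω| ∂μ) * (∫ ω, |X ω| * min ((Y ω)^2) 1 ∂μ) ≤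
      (∫ ω, |T ω| ^ q ∂μ) + ((∫ ω, |X ω| ^ q ∂μ) + ∫ ω, |Y ω| ^ q ∂μ) := by
  have key : ∀ x : ℝ, 0 ≤ x → ∀ ω, x * (|X ω| * min ((Y ω)^2) 1) ≤ x ^ q + (|X ω| ^ q + |Y ω| ^ q) := by
    intro x hx ω
    have h1 := pw3 (abs_nonneg (Y ω)) hq (by linarith)
    have h2 := yg3 hx (abs_nonneg (X ω)) (abs_nonneg (Y ω)) hq
    rw [sq_abs] at h1
    have := mul_le_mul_of_nonneg_left (mul_le_mul_of_nonneg_left h1 (abs_nonneg (X ω))) hx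
    linarith
  have hXY : Integrable (fun ω => |X ω| ^ q + |Y ω| ^ q) μ := hXq.add hYq
  have hV := (mom1 hX hY hXq hYq hq hq3).1
  have hi : Integrable (fun ω => |T ω| * (|X ω| * min ((Y ω)^2) 1)) μ :=
    (hTq.add hXY).mono' (by fun_prop)
      (Filter.Eventually.of_forall fun ω => by
        rw [Real.norm_of_nonneg (by positivity)]; exact key _ (abs_nonneg _) ω)
  refine ⟨hi, ?_, ?_⟩
  · rw [← integral_add hXq hYq, ← integral_add hTq hXY]
    exact integral_mono hi (hTq.add hXY) (fun ω => key _ (abs_nonneg _) ω)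
  · rw [← integral_add hXq hYq]
    have h1 : ∀ x : ℝ, 0 ≤ x → x * (∫ ω, |X ω| * min ((Y ω)^2) 1 ∂μ) ≤ x ^ q + ∫ ω, |X ω| ^ q + |Y ω| ^ q ∂μ := by
      intro x hx
      rw [← integral_const_mul]
      have := integral_mono (hV.const_mul x) ((integrable_const (x^q)).add hXY) (fun ω => key x hx ω)
      simp only [Pi.add_apply] at this
      rw [integral_add (integrable_const (x^q)) hXY] at this
      simpa using this
    rw [← integral_mul_const]
    have := integral_mono (hTi.abs.mul_const (∫ ω, |X ω| * min ((Y ω)^2) 1 ∂μ))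
      (hTq.add (integrable_const (∫ ω, |X ω| ^ q + |Y ω| ^ q ∂μ))) (fun ω => h1 _ (abs_nonneg (T ω)))
    simp only [Pi.add_apply] at this
    rw [integral_add hTq (integrable_const _)] at this
    simpa using this

/-- clipping -/
lemma mom5 {X Y : Ω → ℝ} {q : ℝ} (hX : Measurable X) (hY : Measurable Y)
    (hXq : Integrable (fun ω => |X ω| ^ q) μ) (hYq : Integrable (fun ω => |Y ω| ^ q) μ)
    (hq : 2 < q) :
    2 * (∫ ω, |X ω * Y ω - clip (X ω * Y ω)| ∂μ) ≤ (∫ ω, |X ω| ^ q ∂μ) + ∫ ω, |Y ω| ^ q ∂μ := by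
  rw [← integral_const_mul]
  refine (dom_int (by unfold clip; fun_prop) (fun ω => by positivity) hXq hYq (fun ω => ?_)).2
  have h1 := pw4 (abs_nonneg (X ω * Y ω)) hq
  have h2 := half_amgm (p := q) (abs_nonneg (X ω)) (abs_nonneg (Y ω))
  rw [← abs_mul] at h2
  rw [sub_clip]; linarith

lemma mom6 {X Y : Ω → ℝ} {p : ℝ} (hX : Measurable X) (hY : Measurable Y)
    (hXq : Integrable (fun ω => |X ω| ^ p) μ) (hYq : Integrable (fun ω => |Y ω| ^ p) μ)
    (hp : 2 < p) (hp4 : p ≤ 4) :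
    2 * (∫ ω, (clip (X ω * Y ω))^2 ∂μ) ≤ (∫ ω, |X ω| ^ p ∂μ) + ∫ ω, |Y ω| ^ p ∂μ := by
  rw [← integral_const_mul]
  refine (dom_int (by unfold clip; fun_prop) (fun ω => by positivity) hXq hYq (fun ω => ?_)).2
  have h1 := pw5 (abs_nonneg (X ω * Y ω)) hp hp4
  have h2 := half_amgm (p := p) (abs_nonneg (X ω)) (abs_nonneg (Y ω))
  rw [← abs_mul] at h2
  rw [sq_abs] at h1
  rw [clip_sq]; linarith

lemma abs_le_sqrt_var {Z : Ω → ℝ} (hZ : MemLp Z 2 μ) :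
    ∫ ω, |Z ω - ∫ ω', Z ω' ∂μ| ∂μ ≤ Real.sqrt (variance Z μ) := by
  apply Real.le_sqrt_of_sq_le
  rw [variance_eq_integral hZ.aemeasurable]
  have h1 : MemLp (fun ω => |Z ω - ∫ ω', Z ω' ∂μ|) 2 μ := (hZ.sub (memLp_const _)).abs
  have := variance_nonneg (fun ω => |Z ω - ∫ ω', Z ω' ∂μ|) μ
  rw [variance_eq_sub h1] at this
  simp only [Pi.pow_apply, sq_abs] at this
  linarith

end

section
variable {Ω : Type*} [MeasurableSpace Ω] {μ : Measure Ω} [IsProbabilityMeasure μ]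
variable {ι : Type*} [Fintype ι] [DecidableEq ι]

lemma r1_lemma {X Y : ι → Ω → ℝ} {B : ι → Finset ι} {p q : ℝ}
    (hX : ∀ i, Measurable (X i)) (hY : ∀ i, Measurable (Y i))
    (hX2 : ∀ i, MemLp (X i) 2 μ) (hY2 : ∀ i, MemLp (Y i) 2 μ)
    (hXq : ∀ i, Integrable (fun ω => |X i ω| ^ q) μ) (hYq : ∀ i, Integrable (fun ω => |Y i ω| ^ q) μ)
    (hXp : ∀ i, Integrable (fun ω => |X i ω| ^ p) μ) (hYp : ∀ i, Integrable (fun ω => |Y i ω| ^ p) μ)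
    (hq : 2 < q) (hp : 2 < p) (hp4 : p ≤ 4)
    (h1 : ∑ i, ∫ ω, X i ω * Y i ω ∂μ = 1)
    (hind : ∀ i j, ¬ (B j ∩ B i).Nonempty →
      IndepFun (fun ω => clip (X i ω * Y i ω)) (fun ω => clip (X j ω * Y j ω)) μ)
    (κ : ℕ) (hκ : ∀ i, (Finset.univ.filter fun j => (B j ∩ B i).Nonempty).card ≤ κ) :
    ∫ ω, |1 - ∑ i, X i ω * Y i ω| ∂μ ≤
      (∑ i, ((∫ ω, |X i ω| ^ q ∂μ) + ∫ ω, |Y i ω| ^ q ∂μ)) +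
      Real.sqrt ((κ : ℝ) * (∑ i, ((∫ ω, |X i ω| ^ p ∂μ) + ∫ ω, |Y i ω| ^ p ∂μ)) / 2) := by
  have cm : Measurable clip := by unfold clip; fun_prop
  have iXY : ∀ i, Integrable (fun ω => X i ω * Y i ω) μ := fun i => (hX2 i).integrable_mul (hY2 i)
  have mU : ∀ i, Measurable (fun ω => clip (X i ω * Y i ω)) := fun i => cm.comp ((hX i).mul (hY i))
  have bU : ∀ i ω, |clip (X i ω * Y i ω)| ≤ 1 := fun i ω => by rw [abs_clip]; exact min_le_right _ _
  have U2 : ∀ i, MemLp (fun ω => clip (X i ω * Y i ω)) 2 μ := fun i =>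
    MemLp.of_bound (mU i).aestronglyMeasurable 1 (Filter.Eventually.of_forall (bU i))
  have iU : ∀ i, Integrable (fun ω => clip (X i ω * Y i ω)) μ := fun i => (U2 i).integrable (by norm_num)
  have iD : ∀ i, Integrable (fun ω => |X i ω * Y i ω - clip (X i ω * Y i ω)|) μ := fun i => ((iXY i).sub (iU i)).abs
  have SU2 : MemLp (fun ω => ∑ i, clip (X i ω * Y i ω)) 2 μ := memLp_finsetSum _ (fun i _ => U2 i)
  have hv := var_bound U2 (fun j i => (B j ∩ B i).Nonempty) (fun i j h => by rwa [Finset.inter_comm])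
    hind κ hκ
  have hs := abs_le_sqrt_var SU2
  have hv2 : variance (fun ω => ∑ i, clip (X i ω * Y i ω)) μ ≤
      (κ : ℝ) * (∑ i, ((∫ ω, |X i ω| ^ p ∂μ) + ∫ ω, |Y i ω| ^ p ∂μ)) / 2 := by
    refine hv.trans ?_
    rw [mul_div_assoc, Finset.sum_div]
    gcongr with i
    linarith [mom6 (hX i) (hY i) (hXp i) (hYp i) hp hp4]
  have hs2 := hs.trans (Real.sqrt_le_sqrt hv2)
  set D : ℝ := ∑ i, ∫ ω, |X i ω * Y i ω - clip (X i ω * Y i ω)| ∂μ with hD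
  have hDb : 2 * D ≤ ∑ i, ((∫ ω, |X i ω| ^ q ∂μ) + ∫ ω, |Y i ω| ^ q ∂μ) := by
    rw [hD, Finset.mul_sum]
    exact Finset.sum_le_sum fun i _ => mom5 (hX i) (hY i) (hXq i) (hYq i) hq
  set m := ∫ ω, ∑ i, clip (X i ω * Y i ω) ∂μ with hm
  have hm1 : |1 - m| ≤ D := by
    rw [hm, integral_finsetSum _ (fun i _ => iU i), ← h1, ← Finset.sum_sub_distrib]
    refine (Finset.abs_sum_le_sum_abs _ _).trans (Finset.sum_le_sum fun i _ => ?_)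
    rw [← integral_sub (iXY i) (iU i)]
    exact abs_integral_le_integral_abs
  have pt : ∀ ω, |1 - ∑ i, X i ω * Y i ω| ≤ (D + |(∑ i, clip (X i ω * Y i ω)) - m|) +
      ∑ i, |X i ω * Y i ω - clip (X i ω * Y i ω)| := by
    intro ω
    have e : 1 - ∑ i, X i ω * Y i ω = (1 - m) - ((∑ i, clip (X i ω * Y i ω)) - m) -
      ∑ i, (X i ω * Y i ω - clip (X i ω * Y i ω)) := by
      rw [Finset.sum_sub_distrib]; ring
    rw [e]
    refine (abs_sub _ _).trans ?_
    refine add_le_add ((abs_sub _ _).trans ?_) (Finset.abs_sum_le_sum_abs _ _)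
    gcongr
  have i1 : Integrable (fun ω => |1 - ∑ i, X i ω * Y i ω|) μ :=
    ((integrable_const 1).sub (integrable_finsetSum _ fun i _ => iXY i)).abs
  have i2 : Integrable (fun ω => |(∑ i, clip (X i ω * Y i ω)) - m|) μ :=
    ((SU2.integrable (by norm_num)).sub (integrable_const m)).abs
  have i3 : Integrable (fun ω => ∑ i, |X i ω * Y i ω - clip (X i ω * Y i ω)|) μ :=
    integrable_finsetSum _ fun i _ => iD i
  have i4 : Integrable (fun ω => D + |(∑ i, clip (X i ω * Y i ω)) - m|) μ := (integrable_const D).add i2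
  have fin := integral_mono i1 (i4.add i3) pt
  simp only [Pi.add_apply] at fin
  rw [integral_add i4 i3, integral_add (integrable_const D) i2, integral_finsetSum _ (fun i _ => iD i)] at fin
  simp only [integral_const, probReal_univ, smul_eq_mul, one_mul] at fin
  linarith

lemma exy_lemma {X : ι → Ω → ℝ} {A : ι → Finset ι} (hXmean : ∀ i, ∫ ω, X i ω ∂μ = 0)
    (hX2 : ∀ i, MemLp (X i) 2 μ)
    (hLD1 : ∀ i, IndepFun (X i) (fun ω => fun j : ((A i)ᶜ : Finset ι) => X j.1 ω) μ)
    {W : Ω → ℝ} (hW : ∀ ω, W ω = ∑ i, X i ω) (hWvar : ∫ ω, (W ω) ^ 2 ∂μ = 1)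
    {Y : ι → Ω → ℝ} (hY : ∀ i ω, Y i ω = ∑ j ∈ A i, X j ω)
    (hW2 : MemLp W 2 μ) (hY2 : ∀ i, MemLp (Y i) 2 μ) :
    ∑ i, ∫ ω, X i ω * Y i ω ∂μ = 1 := by
  have iXY : ∀ i, Integrable (fun ω => X i ω * Y i ω) μ := fun i => (hX2 i).integrable_mul (hY2 i)
  have iXW : ∀ i, Integrable (fun ω => X i ω * W ω) μ := fun i => (hX2 i).integrable_mul hW2
  rw [← hWvar]
  have e : ∀ ω, (W ω)^2 = ∑ i, X i ω * W ω := by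
    intro ω; rw [← Finset.sum_mul, ← hW, sq]
  simp_rw [e]
  rw [integral_finsetSum _ (fun i _ => iXW i)]
  refine Finset.sum_congr rfl fun i _ => ?_
  have h := ind_W hLD1 hW hY measurable_id i
  have h2 := h.integral_fun_mul_eq_mul_integral (hX2 i).aestronglyMeasurable
    (hW2.sub (hY2 i)).aestronglyMeasurable
  rw [hXmean i, zero_mul] at h2
  simp only [id, mul_sub] at h2
  rw [integral_sub (iXW i) (iXY i)] at h2
  linarith

lemma ewf_lemma {X : ι → Ω → ℝ} {A : ι → Finset ι} (hXmean : ∀ i, ∫ ω, X i ω ∂μ = 0)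
    (hX2 : ∀ i, MemLp (X i) 2 μ)
    (hLD1 : ∀ i, IndepFun (X i) (fun ω => fun j : ((A i)ᶜ : Finset ι) => X j.1 ω) μ)
    {W : Ω → ℝ} (hW : ∀ ω, W ω = ∑ i, X i ω)
    {Y : ι → Ω → ℝ} (hY : ∀ i ω, Y i ω = ∑ j ∈ A i, X j ω)
    (hWm : Measurable W) (hYm : ∀ i, Measurable (Y i))
    {f : ℝ → ℝ} (hf : Continuous f) (hb : ∀ w, |f w| ≤ 2.6) :
    (∀ i, Integrable (fun ω => X i ω * (f (W ω) - f (W ω - Y i ω))) μ) ∧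
    Integrable (fun ω => W ω * f (W ω)) μ ∧
    ∫ ω, W ω * f (W ω) ∂μ = ∑ i, ∫ ω, X i ω * (f (W ω) - f (W ω - Y i ω)) ∂μ := by
  have hfm := hf.measurable
  have iX : ∀ i, Integrable (X i) μ := fun i => (hX2 i).integrable (by norm_num)
  have i1 : ∀ i, Integrable (fun ω => X i ω * f (W ω)) μ := fun i =>
    (iX i).mul_bdd (c := 2.6) (hfm.comp hWm).aestronglyMeasurable (Filter.Eventually.of_forall fun ω => hb _)
  have i2 : ∀ i, Integrable (fun ω => X i ω * f (W ω - Y i ω)) μ := fun i =>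
    (iX i).mul_bdd (c := 2.6) (hfm.comp (hWm.sub (hYm i))).aestronglyMeasurable
      (Filter.Eventually.of_forall fun ω => hb _)
  have e : ∀ ω, W ω * f (W ω) = ∑ i, X i ω * f (W ω) := by
    intro ω; rw [← Finset.sum_mul, ← hW]
  refine ⟨fun i => by simp only [mul_sub]; exact (i1 i).sub (i2 i), ?_, ?_⟩
  · simp_rw [e]; exact integrable_finsetSum _ fun i _ => i1 i
  simp_rw [e]
  rw [integral_finsetSum _ (fun i _ => i1 i)]
  refine Finset.sum_congr rfl fun i _ => ?_
  simp only [mul_sub]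
  rw [integral_sub (i1 i) (i2 i)]
  have h2 := (ind_W hLD1 hW hY hfm i).integral_fun_mul_eq_mul_integral (hX2 i).aestronglyMeasurable
    (hfm.comp (hWm.sub (hYm i))).aestronglyMeasurable
  rw [hXmean i, zero_mul] at h2
  have h3 : ∫ ω, X i ω * f (W ω - Y i ω) ∂μ = 0 := h2
  rw [h3, sub_zero]

lemma ew_lemma {X : ι → Ω → ℝ} {A B : ι → Finset ι} {q : ℝ}
    (hX : ∀ i, Measurable (X i)) (hX2 : ∀ i, MemLp (X i) 2 μ)
    (hiA : ∀ i, i ∈ A i) (hAB : ∀ i, A i ⊆ B i)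
    (hLD2 : ∀ i, IndepFun (fun ω => fun j : (A i : Finset ι) => X j.1 ω)
      (fun ω => fun j : ((B i)ᶜ : Finset ι) => X j.1 ω) μ)
    {W : Ω → ℝ} (hW : ∀ ω, W ω = ∑ i, X i ω) (hWvar : ∫ ω, (W ω) ^ 2 ∂μ = 1)
    {Y : ι → Ω → ℝ} (hY : ∀ i ω, Y i ω = ∑ j ∈ A i, X j ω)
    (hW2 : MemLp W 2 μ) (hYm : ∀ i, Measurable (Y i))
    (hXq : ∀ i, Integrable (fun ω => |X i ω| ^ q) μ) (hYq : ∀ i, Integrable (fun ω => |Y i ω| ^ q) μ)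
    (hq : 2 < q) (hq3 : q ≤ 3)
    (κ : ℕ) (hκ : ∀ i, (Finset.univ.filter fun j => (B j ∩ B i).Nonempty).card ≤ κ) :
    (∀ i, Integrable (fun ω => |W ω| * (|X i ω| * min ((Y i ω)^2) 1)) μ) ∧
    ∑ i, ∫ ω, |W ω| * (|X i ω| * min ((Y i ω)^2) 1) ∂μ ≤
      (∑ i, ∫ ω, |X i ω| * min ((Y i ω)^2) 1 ∂μ) +
        4 * κ * ∑ i, ((∫ ω, |X i ω| ^ q ∂μ) + ∫ ω, |Y i ω| ^ q ∂μ) := by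
  have iX : ∀ i, Integrable (X i) μ := fun i => (hX2 i).integrable (by norm_num)
  have iW : Integrable W μ := hW2.integrable (by norm_num)
  have hEW : ∫ ω, |W ω| ∂μ ≤ 1 := by
    have : ∫ ω, |W ω| ∂μ ≤ ∫ ω, (1 + (W ω)^2)/2 ∂μ := by
      refine integral_mono iW.abs (((integrable_const 1).add hW2.integrable_sq).div_const 2) fun ω => ?_
      change |W ω| ≤ (1 + (W ω)^2)/2
      rw [← sq_abs (W ω)]
      nlinarith [sq_nonneg (|W ω| - 1)]
    rw [integral_div, integral_add (integrable_const _) hW2.integrable_sq, hWvar] at this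
    norm_num at this
    exact this
  have hWZ : ∀ i ω, W ω - ∑ l ∈ (B i)ᶜ, X l ω = ∑ l ∈ B i, X l ω := by
    intro i ω
    rw [hW, ← Finset.sum_add_sum_compl (B i) (fun l => X l ω), add_sub_cancel_right]
  have iC : ∀ i, Integrable (fun ω => |∑ l ∈ (B i)ᶜ, X l ω|) μ := fun i =>
    (integrable_finsetSum _ fun l _ => iX l).abs
  have iV : ∀ i, Integrable (fun ω => |X i ω| * min ((Y i ω)^2) 1) μ := fun i =>
    (mom1 (hX i) (hYm i) (hXq i) (hYq i) hq hq3).1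
  have hEC : ∀ i, ∫ ω, |∑ l ∈ (B i)ᶜ, X l ω| ∂μ ≤ 1 + ∑ l ∈ B i, ∫ ω, |X l ω| ∂μ := by
    intro i
    have hs : Integrable (fun ω => ∑ l ∈ B i, |X l ω|) μ := integrable_finsetSum _ fun l _ => (iX l).abs
    have : ∫ ω, |∑ l ∈ (B i)ᶜ, X l ω| ∂μ ≤ ∫ ω, |W ω| + ∑ l ∈ B i, |X l ω| ∂μ := by
      refine integral_mono (iC i) (iW.abs.add hs) fun ω => ?_
      have e : ∑ l ∈ (B i)ᶜ, X l ω = W ω - ∑ l ∈ B i, X l ω := by linarith [hWZ i ω]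
      change |∑ l ∈ (B i)ᶜ, X l ω| ≤ |W ω| + ∑ l ∈ B i, |X l ω|
      rw [e]
      exact (abs_sub _ _).trans (by gcongr; exact Finset.abs_sum_le_sum_abs _ _)
    rw [integral_add iW.abs hs, integral_finsetSum _ (fun l _ => (iX l).abs)] at this
    linarith
  have hind : ∀ i, IndepFun (fun ω => |∑ l ∈ (B i)ᶜ, X l ω|) (fun ω => |X i ω| * min ((Y i ω)^2) 1) μ := fun i =>
    ind_Z (φ := fun v => |v.1| * min (v.2^2) 1) hiA hLD2 hY (by fun_prop) i
  have iCV : ∀ i, Integrable (fun ω => |∑ l ∈ (B i)ᶜ, X l ω| * (|X i ω| * min ((Y i ω)^2) 1)) μ := fun i =>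
    (hind i).integrable_mul (iC i) (iV i)
  have iTV : ∀ i l, Integrable (fun ω => |X l ω| * (|X i ω| * min ((Y i ω)^2) 1)) μ := fun i l =>
    (mom4 (hX l) (hX i) (hYm i) (hXq l) (iX l) (hXq i) (hYq i) hq hq3).1
  have iTVs : ∀ i, Integrable (fun ω => ∑ l ∈ B i, |X l ω| * (|X i ω| * min ((Y i ω)^2) 1)) μ := fun i =>
    integrable_finsetSum _ fun l _ => iTV i l
  have pt : ∀ i ω, |W ω| * (|X i ω| * min ((Y i ω)^2) 1) ≤
      |∑ l ∈ (B i)ᶜ, X l ω| * (|X i ω| * min ((Y i ω)^2) 1) +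
        ∑ l ∈ B i, |X l ω| * (|X i ω| * min ((Y i ω)^2) 1) := by
    intro i ω
    rw [← Finset.sum_mul, ← add_mul]
    gcongr
    have e : W ω = ∑ l ∈ (B i)ᶜ, X l ω + ∑ l ∈ B i, X l ω := by linarith [hWZ i ω]
    rw [e]
    exact (abs_add_le _ _).trans (by gcongr; exact Finset.abs_sum_le_sum_abs _ _)
  have iWV : ∀ i, Integrable (fun ω => |W ω| * (|X i ω| * min ((Y i ω)^2) 1)) μ := fun i =>
    ((iCV i).add (iTVs i)).mono'
      (iW.abs.aestronglyMeasurable.mul (iV i).aestronglyMeasurable)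
      (Filter.Eventually.of_forall fun ω => by rw [Real.norm_of_nonneg (by positivity)]; exact pt i ω)
  refine ⟨iWV, ?_⟩
  set a : ι → ℝ := fun i => ∫ ω, |X i ω| ^ q ∂μ with ha
  set b : ι → ℝ := fun i => ∫ ω, |Y i ω| ^ q ∂μ with hb
  have ha0 : ∀ i, 0 ≤ a i := fun i => integral_nonneg fun ω => by positivity
  have hb0 : ∀ i, 0 ≤ b i := fun i => integral_nonneg fun ω => by positivity
  have main : ∀ i, ∫ ω, |W ω| * (|X i ω| * min ((Y i ω)^2) 1) ∂μ ≤
      (∫ ω, |X i ω| * min ((Y i ω)^2) 1 ∂μ) + ∑ l ∈ B i, 2 * (a l + (a i + b i)) := by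
    intro i
    have h1 := integral_mono (iWV i) ((iCV i).add (iTVs i)) (pt i)
    simp only [Pi.add_apply] at h1
    rw [integral_add (iCV i) (iTVs i), integral_finsetSum _ (fun l _ => iTV i l),
      (hind i).integral_fun_mul_eq_mul_integral (iC i).aestronglyMeasurable (iV i).aestronglyMeasurable] at h1
    have hV0 : 0 ≤ ∫ ω, |X i ω| * min ((Y i ω)^2) 1 ∂μ := integral_nonneg fun ω => by positivity
    have h2 := mul_le_mul_of_nonneg_right (hEC i) hV0
    rw [add_mul, one_mul, Finset.sum_mul] at h2
    have h3 : (∑ l ∈ B i, (∫ ω, |X l ω| ∂μ) * ∫ ω, |X i ω| * min ((Y i ω)^2) 1 ∂μ) +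
      ∑ l ∈ B i, ∫ ω, |X l ω| * (|X i ω| * min ((Y i ω)^2) 1) ∂μ ≤ ∑ l ∈ B i, 2 * (a l + (a i + b i)) := by
      rw [← Finset.sum_add_distrib]
      refine Finset.sum_le_sum fun l _ => ?_
      have := mom4 (hX l) (hX i) (hYm i) (hXq l) (iX l) (hXq i) (hYq i) hq hq3
      simp only [ha, hb]
      linarith [this.2.1, this.2.2]
    linarith
  have hBc : ∀ i, ((B i).card : ℝ) ≤ κ := by
    intro i
    have : (B i).card ≤ κ := by
      refine le_trans (Finset.card_le_card fun j hj => ?_) (hκ i)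
      simp only [Finset.mem_filter, Finset.mem_univ, true_and]
      exact ⟨j, Finset.mem_inter.2 ⟨hAB j (hiA j), hj⟩⟩
    exact_mod_cast this
  have hBc' : ∀ l, ((Finset.univ.filter fun i => l ∈ B i).card : ℝ) ≤ κ := by
    intro l
    have : (Finset.univ.filter fun i => l ∈ B i).card ≤ κ := by
      refine le_trans (Finset.card_le_card fun j hj => ?_) (hκ l)
      simp only [Finset.mem_filter, Finset.mem_univ, true_and] at hj ⊢
      exact ⟨l, Finset.mem_inter.2 ⟨hj, hAB l (hiA l)⟩⟩
    exact_mod_cast this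
  refine (Finset.sum_le_sum fun i _ => main i).trans ?_
  rw [Finset.sum_add_distrib]
  gcongr
  have s1 : ∑ i, ∑ l ∈ B i, a l ≤ κ * ∑ i, a i := by
    have : ∀ i, ∑ l ∈ B i, a l = ∑ l, if l ∈ B i then a l else 0 := by
      intro i; rw [← Finset.sum_filter]; congr 1; ext; simp
    simp_rw [this]
    rw [Finset.sum_comm, Finset.mul_sum]
    refine Finset.sum_le_sum fun l _ => ?_
    rw [← Finset.sum_filter, Finset.sum_const, nsmul_eq_mul]
    exact mul_le_mul_of_nonneg_right (hBc' l) (ha0 l)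
  have s2 : ∑ i, ∑ l ∈ B i, (a i + b i) ≤ κ * ∑ i, (a i + b i) := by
    rw [Finset.mul_sum]
    refine Finset.sum_le_sum fun i _ => ?_
    rw [Finset.sum_const, nsmul_eq_mul]
    exact mul_le_mul_of_nonneg_right (hBc i) (add_nonneg (ha0 i) (hb0 i))
  have s3 : (κ:ℝ) * ∑ i, a i ≤ κ * ∑ i, (a i + b i) := by
    gcongr with i; linarith [hb0 i]
  simp_rw [← Finset.mul_sum, Finset.sum_add_distrib (f := a) (g := fun _ => (a _ + b _))]
  simp only [Finset.sum_add_distrib] at s1 s2 s3 ⊢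
  linarith

end

section
variable {Ω : Type*} [MeasurableSpace Ω] {μ : Measure Ω} [IsProbabilityMeasure μ]
variable {ι : Type*} [Fintype ι] [DecidableEq ι]

lemma stein_step {X : ι → Ω → ℝ} {A : ι → Finset ι} (hXmean : ∀ i, ∫ ω, X i ω ∂μ = 0)
    (hX : ∀ i, Measurable (X i)) (hX2 : ∀ i, MemLp (X i) 2 μ)
    (hLD1 : ∀ i, IndepFun (X i) (fun ω => fun j : ((A i)ᶜ : Finset ι) => X j.1 ω) μ)
    {W : Ω → ℝ} (hW : ∀ ω, W ω = ∑ i, X i ω)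
    {Y : ι → Ω → ℝ} (hY : ∀ i ω, Y i ω = ∑ j ∈ A i, X j ω)
    (hWm : Measurable W) (hYm : ∀ i, Measurable (Y i)) (hY2 : ∀ i, MemLp (Y i) 2 μ)
    (iV : ∀ i, Integrable (fun ω => |X i ω| * min ((Y i ω)^2) 1) μ)
    (iR : ∀ i, Integrable (fun ω => |X i ω| * max (|Y i ω| - 1) 0) μ)
    (iWV : ∀ i, Integrable (fun ω => |W ω| * (|X i ω| * min ((Y i ω)^2) 1)) μ)
    (z : ℝ) {α : ℝ} (hα : 0 < α) :
    |(∫ ω, hz z α (W ω) ∂μ) - ∫ x, (Real.sqrt (2 * Real.pi))⁻¹ * Real.exp (-x ^ 2 / 2) * hz z α x| ≤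
      (∫ ω, |1 - ∑ i, X i ω * Y i ω| ∂μ) +
      |∑ i, ∫ ω, X i ω * (∫ t in Set.Ioc (-1) 1, kk (Y i ω) t * (hz z α (W ω) - hz z α (W ω - t))) ∂μ| +
      (2 * (∑ i, ∫ ω, |X i ω| * max (|Y i ω| - 1) 0 ∂μ) +
        0.5 * (∑ i, ∫ ω, |W ω| * (|X i ω| * min ((Y i ω)^2) 1) ∂μ) +
        1.3 * ∑ i, ∫ ω, |X i ω| * min ((Y i ω)^2) 1 ∂μ) := by
  set m := ∫ x, (Real.sqrt (2 * Real.pi))⁻¹ * Real.exp (-x ^ 2 / 2) * hz z α x with hm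
  obtain ⟨f, hd, hb, hb'⟩ := stein_exists (hz z α) (hz_cont z α) (fun x => hz_nonneg z x hα)
    (fun x => hz_le_one z x hα) m hm
  have hfc : Continuous f := continuous_iff_continuousAt.2 fun w => (hd w).continuousAt
  have hzc := hz_cont z α
  have hzm := hzc.measurable
  obtain ⟨iD, iWf, eWf⟩ := ewf_lemma hXmean hX2 hLD1 hW hY hWm hYm hfc hb
  set g : ℝ → ℝ := fun w => w * f w + hz z α w - m with hg
  have hgc : Continuous g := by fun_prop
  have hgm := hgc.measurable
  have hgb : ∀ w, |g w| ≤ 1 := hb'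
  have iXY : ∀ i, Integrable (fun ω => X i ω * Y i ω) μ := fun i => (hX2 i).integrable_mul (hY2 i)
  have igXY : ∀ i, Integrable (fun ω => X i ω * Y i ω * g (W ω)) μ := fun i =>
    (iXY i).mul_bdd (c := 1) (hgm.comp hWm).aestronglyMeasurable (Filter.Eventually.of_forall fun ω => hgb _)
  have i1 : Integrable (fun ω => 1 - ∑ i, X i ω * Y i ω) μ :=
    (integrable_const 1).sub (integrable_finsetSum _ fun i _ => iXY i)
  have i1g : Integrable (fun ω => (1 - ∑ i, X i ω * Y i ω) * g (W ω)) μ :=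
    i1.mul_bdd (c := 1) (hgm.comp hWm).aestronglyMeasurable (Filter.Eventually.of_forall fun ω => hgb _)
  have iQ : ∀ i, Integrable (fun ω => X i ω *
      (∫ t in Set.Ioc (-1) 1, kk (Y i ω) t * (hz z α (W ω) - hz z α (W ω - t)))) μ := by
    intro i
    refine (fub ((hX2 i).integrable (by norm_num))
      (G := fun r => kk (Y i r.1) r.2 * (hz z α (W r.1) - hz z α (W r.1 - r.2))) ?_ ?_).2.2
    · refine Measurable.mul (kk_meas.comp (((hYm i).comp measurable_fst).prodMk measurable_snd)) ?_
      exact (hzm.comp (hWm.comp measurable_fst)).sub (hzm.comp ((hWm.comp measurable_fst).sub measurable_snd))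
    · intro ω t _
      simp only
      rw [abs_mul]
      have a1 := kk_abs_le (Y i ω) t
      have a2 : |hz z α (W ω) - hz z α (W ω - t)| ≤ 1 := by
        have := hz_nonneg z (W ω) hα
        have := hz_nonneg z (W ω - t) hα
        have := hz_le_one z (W ω) hα
        have := hz_le_one z (W ω - t) hα
        rw [abs_le]; constructor <;> linarith
      nlinarith [abs_nonneg (kk (Y i ω) t), abs_nonneg (hz z α (W ω) - hz z α (W ω - t))]
  have ih := hz_W_integrable (μ := μ) hWm z hα
  have ig : Integrable (fun ω => g (W ω)) μ := (iWf.add ih).sub (integrable_const m)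
  have eh : (∫ ω, hz z α (W ω) ∂μ) - m = (∫ ω, g (W ω) ∂μ) - ∫ ω, W ω * f (W ω) ∂μ := by
    have : ∫ ω, g (W ω) ∂μ = ∫ ω, (W ω * f (W ω) + hz z α (W ω)) - m ∂μ := rfl
    have is : Integrable (fun ω => W ω * f (W ω) + hz z α (W ω)) μ := iWf.add ih
    rw [this, integral_sub is (integrable_const m), integral_add iWf ih]
    simp only [integral_const, probReal_univ, smul_eq_mul, one_mul]
    ring
  have eg : ∫ ω, g (W ω) ∂μ = (∫ ω, (1 - ∑ i, X i ω * Y i ω) * g (W ω) ∂μ) +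
      ∑ i, ∫ ω, X i ω * Y i ω * g (W ω) ∂μ := by
    rw [← integral_finsetSum _ (fun i _ => igXY i), ← integral_add i1g (integrable_finsetSum _ fun i _ => igXY i)]
    congr 1; ext ω; rw [← Finset.sum_mul]; ring
  have eE : ∀ i, ∫ ω, X i ω * (f (W ω) - f (W ω - Y i ω) - Y i ω * g (W ω) +
        ∫ t in Set.Ioc (-1) 1, kk (Y i ω) t * (hz z α (W ω) - hz z α (W ω - t))) ∂μ =
      (∫ ω, X i ω * (f (W ω) - f (W ω - Y i ω)) ∂μ) - (∫ ω, X i ω * Y i ω * g (W ω) ∂μ) +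
      ∫ ω, X i ω * (∫ t in Set.Ioc (-1) 1, kk (Y i ω) t * (hz z α (W ω) - hz z α (W ω - t))) ∂μ := by
    intro i
    have is : Integrable (fun ω => X i ω * (f (W ω) - f (W ω - Y i ω)) - X i ω * Y i ω * g (W ω)) μ :=
      (iD i).sub (igXY i)
    rw [← integral_sub (iD i) (igXY i), ← integral_add is (iQ i)]
    congr 1; ext ω; ring
  have bE : ∀ i, |∫ ω, X i ω * (f (W ω) - f (W ω - Y i ω) - Y i ω * g (W ω) +
        ∫ t in Set.Ioc (-1) 1, kk (Y i ω) t * (hz z α (W ω) - hz z α (W ω - t))) ∂μ| ≤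
      2 * (∫ ω, |X i ω| * max (|Y i ω| - 1) 0 ∂μ) +
        0.5 * (∫ ω, |W ω| * (|X i ω| * min ((Y i ω)^2) 1) ∂μ) +
        1.3 * ∫ ω, |X i ω| * min ((Y i ω)^2) 1 ∂μ := by
    intro i
    have is : Integrable (fun ω => 2 * (|X i ω| * max (|Y i ω| - 1) 0) +
        0.5 * (|W ω| * (|X i ω| * min ((Y i ω)^2) 1))) μ := ((iR i).const_mul 2).add ((iWV i).const_mul 0.5)
    rw [← integral_const_mul, ← integral_const_mul, ← integral_const_mul,
      ← integral_add ((iR i).const_mul 2) ((iWV i).const_mul 0.5),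
      ← integral_add is ((iV i).const_mul 1.3)]
    rw [← Real.norm_eq_abs]
    refine norm_integral_le_of_norm_le (is.add ((iV i).const_mul 1.3))
      (Filter.Eventually.of_forall fun ω => ?_)
    have := det_lemma hzc hd hb hb' (W ω) (Y i ω)
    have h2 := mul_le_mul_of_nonneg_left this (abs_nonneg (X i ω))
    rw [← abs_mul] at h2
    rw [Real.norm_eq_abs]
    refine h2.trans (le_of_eq ?_)
    ring
  have e1 : |∫ ω, (1 - ∑ i, X i ω * Y i ω) * g (W ω) ∂μ| ≤ ∫ ω, |1 - ∑ i, X i ω * Y i ω| ∂μ := by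
    rw [← Real.norm_eq_abs]
    refine norm_integral_le_of_norm_le i1.abs (Filter.Eventually.of_forall fun ω => ?_)
    rw [Real.norm_eq_abs, abs_mul]
    exact mul_le_of_le_one_right (abs_nonneg _) (hgb _)
  have sE := Finset.sum_congr (s₁ := Finset.univ) rfl (fun i _ => eE i)
  rw [Finset.sum_add_distrib, Finset.sum_sub_distrib] at sE
  have sB := (Finset.abs_sum_le_sum_abs _ _).trans (Finset.sum_le_sum (s := Finset.univ) (fun i _ => bE i))
  rw [Finset.sum_add_distrib, Finset.sum_add_distrib, ← Finset.mul_sum, ← Finset.mul_sum, ← Finset.mul_sum, sE] at sB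
  rw [eh, eg, eWf]
  rw [abs_le] at e1 sB ⊢
  have q1 := le_abs_self (∑ i, ∫ ω, X i ω * (∫ t in Set.Ioc (-1) 1, kk (Y i ω) t * (hz z α (W ω) - hz z α (W ω - t))) ∂μ)
  have q2 := neg_abs_le (∑ i, ∫ ω, X i ω * (∫ t in Set.Ioc (-1) 1, kk (Y i ω) t * (hz z α (W ω) - hz z α (W ω - t))) ∂μ)
  constructor <;> linarith [e1.1, e1.2, sB.1, sB.2]

/-- closing the self-bounding inequality -/
lemma final_arith {F G : ℝ → ℝ} {β g κ : ℝ} (hβ : 0 ≤ β) (hg : 0 ≤ g) (hκ : 0 ≤ κ)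
    (hb : ∀ z, |F z - G z| ≤ 1)
    (H : ∀ δ : ℝ, 0 ≤ δ → (∀ z, |F z - G z| ≤ δ) → ∀ α : ℝ, 0 < α → 8 * β ≤ α → ∀ z,
      |F z - G z| ≤ 0.4 * α + ((β + Real.sqrt (κ * g / 2)) + 2 * β + 2 * κ * β + δ / 8 +
        Real.sqrt (0.4 * (κ * g) + 4 * δ * (κ * β)))) (z : ℝ) :
    |F z - G z| ≤ (13 + 11 * κ) * β + 2.5 * Real.sqrt (κ * g) := by
  have bdd : BddAbove (Set.range fun z => |F z - G z|) := ⟨1, by rintro _ ⟨z, rfl⟩; exact hb z⟩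
  set δ := ⨆ z, |F z - G z| with hδ
  have hle : ∀ z, |F z - G z| ≤ δ := fun z => le_ciSup bdd z
  have hδ0 : 0 ≤ δ := (abs_nonneg _).trans (hle 0)
  set s := Real.sqrt (κ * g) with hs
  have hs0 : 0 ≤ s := Real.sqrt_nonneg _
  have hss : s^2 = κ * g := Real.sq_sqrt (by positivity)
  have hκβ : 0 ≤ κ * β := by positivity
  have b1 : Real.sqrt (κ * g / 2) ≤ 0.7072 * s := by
    apply Real.sqrt_le_iff.2 ⟨by positivity, by nlinarith⟩
  have b2 : Real.sqrt (0.4 * (κ * g) + 4 * δ * (κ * β)) ≤ 0.633 * s + δ / 4 + 4 * (κ * β) := by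
    apply Real.sqrt_le_iff.2 ⟨by positivity, ?_⟩
    have : 0 ≤ s * δ := by positivity
    have : 0 ≤ s * (κ * β) := by positivity
    rw [← hss]
    nlinarith [sq_nonneg (δ / 4 - 4 * (κ * β))]
  have main : ∀ ε : ℝ, 0 < ε → δ ≤ (13 + 11 * κ) * β + 2.5 * s + ε := by
    intro ε hε
    have : δ ≤ 0.4 * (8 * β + ε) + ((β + Real.sqrt (κ * g / 2)) + 2 * β + 2 * κ * β + δ / 8 +
        Real.sqrt (0.4 * (κ * g) + 4 * δ * (κ * β))) :=
      ciSup_le fun z => H δ hδ0 hle _ (by positivity) (by linarith) z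
    linarith
  exact (hle z).trans (le_of_forall_pos_le_add main)

end

theorem stmt_1
    {Ω : Type*} [MeasurableSpace Ω] {μ : Measure Ω} [IsProbabilityMeasure μ]
    {ι : Type*} [Fintype ι] [DecidableEq ι]
    (p : ℝ) (hp : 2 < p ∧ p ≤ 4)
    (X : ι → Ω → ℝ) (A B : ι → Finset ι)
    (hXmeas : ∀ i, Measurable (X i))
    (hXmean : ∀ i, ∫ ω, X i ω ∂μ = 0)
    (hXsq : ∀ i, Integrable (fun ω => (X i ω) ^ 2) μ)
    (hXp : ∀ i, Integrable (fun ω => |X i ω| ^ p) μ)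
    (hiA : ∀ i, i ∈ A i) (hAB : ∀ i, A i ⊆ B i)
    (hLD1 : ∀ i, IndepFun (X i) (fun ω => fun j : ((A i)ᶜ : Finset ι) => X j.1 ω) μ)
    (hLD2 : ∀ i, IndepFun (fun ω => fun j : (A i : Finset ι) => X j.1 ω)
      (fun ω => fun j : ((B i)ᶜ : Finset ι) => X j.1 ω) μ)
    (W : Ω → ℝ) (hW : ∀ ω, W ω = ∑ i, X i ω)
    (hWvar : ∫ ω, (W ω) ^ 2 ∂μ = 1)
    (Y : ι → Ω → ℝ) (hY : ∀ i ω, Y i ω = ∑ j ∈ A i, X j ω)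
    (κ : ℕ)
    (hκ : ∀ i, (Finset.univ.filter fun j => (B j ∩ B i).Nonempty).card ≤ κ) :
    ∀ z : ℝ, |(μ {ω | W ω ≤ z}).toReal - stdGaussianCDF z| ≤
      (13 + 11 * (κ : ℝ)) *
        ∑ i, ((∫ ω, |X i ω| ^ (min 3 p) ∂μ) + ∫ ω, |Y i ω| ^ (min 3 p) ∂μ) +
      2.5 * Real.sqrt ((κ : ℝ) *
        ∑ i, ((∫ ω, |X i ω| ^ p ∂μ) + ∫ ω, |Y i ω| ^ p ∂μ)) := by
  have hq : 2 < min 3 p := lt_min (by norm_num) hp.1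
  have hq3 : min 3 p ≤ 3 := min_le_left _ _
  have hqp : min 3 p ≤ p := min_le_right _ _
  set q : ℝ := min 3 p with hqdef
  have hXL : ∀ i, MemLp (X i) (ENNReal.ofReal p) μ := fun i => memLp_of_int (hXmeas i) (by linarith) (hXp i)
  have eY : ∀ i, Y i = fun ω => ∑ j ∈ A i, X j ω := fun i => funext (hY i)
  have eW : W = fun ω => ∑ i, X i ω := funext hW
  have hYL : ∀ i, MemLp (Y i) (ENNReal.ofReal p) μ := fun i => by
    rw [eY]; exact memLp_finsetSum _ fun j _ => hXL j
  have h2p : (2 : ENNReal) ≤ ENNReal.ofReal p := by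
    have := ENNReal.ofReal_le_ofReal hp.1.le
    simpa using this
  have hX2 : ∀ i, MemLp (X i) 2 μ := fun i => (hXL i).mono_exponent h2p
  have hY2 : ∀ i, MemLp (Y i) 2 μ := fun i => (hYL i).mono_exponent h2p
  have hW2 : MemLp W 2 μ := by rw [eW]; exact memLp_finsetSum _ fun j _ => hX2 j
  have hYm : ∀ i, Measurable (Y i) := fun i => by rw [eY]; fun_prop
  have hWm : Measurable W := by rw [eW]; fun_prop
  have hXq : ∀ i, Integrable (fun ω => |X i ω| ^ q) μ := fun i => int_of_memLp (by linarith) hqp (hXL i)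
  have hYq : ∀ i, Integrable (fun ω => |Y i ω| ^ q) μ := fun i => int_of_memLp (by linarith) hqp (hYL i)
  have hYp : ∀ i, Integrable (fun ω => |Y i ω| ^ p) μ := fun i => int_of_memLp (by linarith) le_rfl (hYL i)
  have m1 := fun i => mom1 (hXmeas i) (hYm i) (hXq i) (hYq i) hq hq3
  obtain ⟨iWV, hWV⟩ := ew_lemma hXmeas hX2 hiA hAB hLD2 hW hWvar hY hW2 hYm hXq hYq hq hq3 κ hκ
  have hexy := exy_lemma hXmean hX2 hLD1 hW hWvar hY hW2 hY2
  have cm : Measurable clip := by unfold clip; fun_prop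
  have hr1 := r1_lemma hXmeas hYm hX2 hY2 hXq hYq hXp hYp hq hp.1 hp.2 hexy
    (fun i j h => ind_pair (φ := fun v => clip (v.1 * v.2)) hiA hAB hLD2 hY (by fun_prop) i j h) κ hκ
  have hvar : ∀ t, variance (fun ω => ∑ i, X i ω * kk (Y i ω) t) μ ≤
      κ * ∑ i, ∫ ω, (X i ω * kk (Y i ω) t)^2 ∂μ := by
    intro t
    have hkt : Measurable (fun y => kk y t) := kk_meas.comp (measurable_id.prodMk measurable_const)
    refine var_bound (fun i => ?_) (fun j i => (B j ∩ B i).Nonempty)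
      (fun i j h => by rwa [Finset.inter_comm]) (fun i j h => ?_) κ hκ
    · refine (hX2 i).mono ((hXmeas i).mul (hkt.comp (hYm i))).aestronglyMeasurable
        (Filter.Eventually.of_forall fun ω => ?_)
      rw [norm_mul]
      exact mul_le_of_le_one_right (norm_nonneg _) (kk_abs_le _ _)
    · exact ind_pair (φ := fun v => v.1 * kk v.2 t) hiA hAB hLD2 hY
        (measurable_fst.mul (hkt.comp measurable_snd)) i j h
  have hT5 : ∑ i, ∫ ω, (X i ω)^2 * min |Y i ω| 1 ∂μ ≤
      ∑ i, ((∫ ω, |X i ω| ^ q ∂μ) + ∫ ω, |Y i ω| ^ q ∂μ) :=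
    Finset.sum_le_sum fun i _ => mom2 (hXmeas i) (hYm i) (hXq i) (hYq i) hq hq3
  have hT6 : ∑ i, ∫ ω, (X i ω)^2 * min ((Y i ω)^2) 1 ∂μ ≤
      ∑ i, ((∫ ω, |X i ω| ^ p ∂μ) + ∫ ω, |Y i ω| ^ p ∂μ) :=
    Finset.sum_le_sum fun i _ => mom3 (hXmeas i) (hYm i) (hXp i) (hYp i) hp.1 hp.2
  have hSR : (∑ i, ∫ ω, |X i ω| * min ((Y i ω)^2) 1 ∂μ) + ∑ i, ∫ ω, |X i ω| * max (|Y i ω| - 1) 0 ∂μ ≤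
      ∑ i, ((∫ ω, |X i ω| ^ q ∂μ) + ∫ ω, |Y i ω| ^ q ∂μ) := by
    rw [← Finset.sum_add_distrib]
    exact Finset.sum_le_sum fun i _ => (m1 i).2.2
  have hS0 : 0 ≤ ∑ i, ∫ ω, |X i ω| * min ((Y i ω)^2) 1 ∂μ :=
    Finset.sum_nonneg fun i _ => integral_nonneg fun ω => by positivity
  have hR0 : 0 ≤ ∑ i, ∫ ω, |X i ω| * max (|Y i ω| - 1) 0 ∂μ :=
    Finset.sum_nonneg fun i _ => integral_nonneg fun ω => by positivity
  have hγ0 : 0 ≤ ∑ i, ((∫ ω, |X i ω| ^ p ∂μ) + ∫ ω, |Y i ω| ^ p ∂μ) :=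
    Finset.sum_nonneg fun i _ => add_nonneg (integral_nonneg fun ω => by positivity)
      (integral_nonneg fun ω => by positivity)
  have sstep := fun z α (hα : 0 < α) => stein_step (z := z) (α := α) hXmean hXmeas hX2 hLD1 hW hY hWm hYm hY2
    (fun i => (m1 i).1) (fun i => (m1 i).2.1) iWV hα
  have Kl := fun z α δ (hα : 0 < α) (hδ : 0 ≤ δ) hF => K_lemma (z := z) (α := α) (δ := δ) hWm hYm hX2 hα hδ hF κ hvar
  generalize (∑ i, ((∫ ω, |X i ω| ^ q ∂μ) + ∫ ω, |Y i ω| ^ q ∂μ)) = β at *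
  generalize (∑ i, ((∫ ω, |X i ω| ^ p ∂μ) + ∫ ω, |Y i ω| ^ p ∂μ)) = γ at *
  generalize (∑ i, ∫ ω, |X i ω| * min ((Y i ω)^2) 1 ∂μ) = S at *
  generalize (∑ i, ∫ ω, |X i ω| * max (|Y i ω| - 1) 0 ∂μ) = R at *
  generalize (∑ i, ∫ ω, (X i ω)^2 * min |Y i ω| 1 ∂μ) = T5 at *
  generalize (∑ i, ∫ ω, (X i ω)^2 * min ((Y i ω)^2) 1 ∂μ) = T6 at *
  have hβ0 : 0 ≤ β := by linarith
  refine final_arith (F := fun z => μ.real {ω | W ω ≤ z}) (G := stdGaussianCDF) hβ0 hγ0 (Nat.cast_nonneg κ) ?_ ?_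
  · intro z
    have a1 : 0 ≤ μ.real {ω | W ω ≤ z} := measureReal_nonneg
    have a2 : μ.real {ω | W ω ≤ z} ≤ 1 := measureReal_le_one
    have a3 := Phi_nonneg z
    have a4 := Phi_le_one z
    rw [abs_le]; constructor <;> linarith
  intro δ hδ hle α hα hαβ
  have hF : ∀ x s, |μ.real {ω | W ω ≤ x + s} - μ.real {ω | W ω ≤ x}| ≤ 0.4 * |s| + 2 * δ := by
    intro x s
    have a1 := abs_le.1 (hle (x + s))
    have a2 := abs_le.1 (hle x)
    have a3 := abs_le.1 (Phi_lip x s)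
    rw [abs_le]; constructor <;> linarith [a1.1, a1.2, a2.1, a2.2, a3.1, a3.2]
  have hκ0 : (0:ℝ) ≤ κ := Nat.cast_nonneg κ
  have core : ∀ z, |(∫ ω, hz z α (W ω) ∂μ) -
      ∫ x, (Real.sqrt (2 * Real.pi))⁻¹ * Real.exp (-x ^ 2 / 2) * hz z α x| ≤
      ((β + Real.sqrt (κ * γ / 2)) + 2 * β + 2 * κ * β + δ / 8 +
        Real.sqrt (0.4 * (κ * γ) + 4 * δ * (κ * β))) := by
    intro z
    have h1 := sstep z α hα
    have h2 := Kl z α δ hα hδ hF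
    have h3 : δ / α * S ≤ δ / 8 := by
      rw [div_mul_eq_mul_div, div_le_div_iff₀ hα (by norm_num)]
      have : S ≤ β := by linarith
      nlinarith
    have h4 : Real.sqrt (2 * (κ * (0.2 * T6 + 2 * δ * T5))) ≤ Real.sqrt (0.4 * (κ * γ) + 4 * δ * (κ * β)) := by
      apply Real.sqrt_le_sqrt
      have b1 := mul_le_mul_of_nonneg_left hT6 hκ0
      have b2 := mul_le_mul_of_nonneg_left hT5 (mul_nonneg hκ0 hδ)
      nlinarith
    rw [add_mul] at h2
    linarith
  intro z
  have u1 := hz_W_lo (μ := μ) hWm z hα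
  have u2 := hz_m_hi z hα
  have u3 := abs_le.1 (core z)
  have u4 := abs_le.1 (Phi_lip z α)
  have l1 := hz_W_hi (μ := μ) hWm (z - α) hα
  have l2 := hz_m_lo (z - α) hα
  have l3 := abs_le.1 (core (z - α))
  have l4 := abs_le.1 (Phi_lip (z - α) α)
  rw [abs_of_pos hα] at u4 l4
  rw [sub_add_cancel] at l1 l4
  rw [abs_le]
  constructor <;> linarith [u3.1, u3.2, u4.1, u4.2, l3.1, l3.2, l4.1, l4.2]
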